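/- Let c be the cost vector with c_i = i - 1 for all i ≥ 1. For every ε > 0 there exists N such that for every n ≥ N, every simple graph G on n vertices admits a partition of its edge set into cliques Q_1, Q_2, …, Q_m such that Σ_{j=1}^m (|V(Q_j)| - 1) ≤ (1 + ε)·n²/4; equivalently, π_2(G, c) ≤ (1 + ε)·n²/4. -/

import Mathlib

open scoped Classical
open Finset

/-- `K` is a clique of `G`: a nonempty set of pairwise adjacent vertices. -/
def IsCliqueOf {V : Type} [Fintype V] [DecidableEq V] (G : SimpleGraph V) (K : Finset V) : Prop :=
  K.Nonempty ∧ G.IsClique (K : Set V)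

/-- Total `c`-cost of a weighting `f` of the finsets of vertices. -/
noncomputable def cliqueCost {V : Type} [Fintype V] [DecidableEq V]
    (c : ℕ → ℝ) (f : Finset V → ℝ) : ℝ :=
  ∑ K : Finset V, c K.card * f K

/-- `f` is a fractional `t`-clique cover of `G`. -/
def IsFracCover {V : Type} [Fintype V] [DecidableEq V]
    (t : ℕ) (G : SimpleGraph V) (f : Finset V → ℝ) : Prop :=
  (∀ K, 0 ≤ f K) ∧ (∀ K, ¬ IsCliqueOf G K → f K = 0) ∧
  ∀ T : Finset V, T.card = t → G.IsClique (T : Set V) →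
    1 ≤ ∑ K ∈ Finset.univ.filter (fun K => T ⊆ K), f K

/-- `f` is a fractional `t`-clique decomposition of `G`. -/
def IsFracDecomp {V : Type} [Fintype V] [DecidableEq V]
    (t : ℕ) (G : SimpleGraph V) (f : Finset V → ℝ) : Prop :=
  (∀ K, 0 ≤ f K) ∧ (∀ K, ¬ IsCliqueOf G K → f K = 0) ∧
  ∀ T : Finset V, T.card = t → G.IsClique (T : Set V) →
    ∑ K ∈ Finset.univ.filter (fun K => T ⊆ K), f K = 1

/-- `f` is an integer (`{0,1}`-valued) `t`-clique cover of `G`. -/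
def IsIntCover {V : Type} [Fintype V] [DecidableEq V]
    (t : ℕ) (G : SimpleGraph V) (f : Finset V → ℝ) : Prop :=
  IsFracCover t G f ∧ ∀ K, f K = 0 ∨ f K = 1

/-- `f` is an integer (`{0,1}`-valued) `t`-clique decomposition of `G`. -/
def IsIntDecomp {V : Type} [Fintype V] [DecidableEq V]
    (t : ℕ) (G : SimpleGraph V) (f : Finset V → ℝ) : Prop :=
  IsFracDecomp t G f ∧ ∀ K, f K = 0 ∨ f K = 1

/-- θ*_t(G,c): minimum total c-cost of a fractional t-clique cover. -/
noncomputable def thetaFrac {V : Type} [Fintype V] [DecidableEq V]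
    (t : ℕ) (G : SimpleGraph V) (c : ℕ → ℝ) : ℝ :=
  sInf { x | ∃ f, IsFracCover t G f ∧ x = cliqueCost c f }

/-- θ_t(G,c): minimum total c-cost of an integer t-clique cover. -/
noncomputable def thetaInt {V : Type} [Fintype V] [DecidableEq V]
    (t : ℕ) (G : SimpleGraph V) (c : ℕ → ℝ) : ℝ :=
  sInf { x | ∃ f, IsIntCover t G f ∧ x = cliqueCost c f }

/-- π*_t(G,c): minimum total c-cost of a fractional t-clique decomposition. -/
noncomputable def piFrac {V : Type} [Fintype V] [DecidableEq V]
    (t : ℕ) (G : SimpleGraph V) (c : ℕ → ℝ) : ℝ :=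
  sInf { x | ∃ f, IsFracDecomp t G f ∧ x = cliqueCost c f }

/-- π_t(G,c): minimum total c-cost of an integer t-clique decomposition. -/
noncomputable def piInt {V : Type} [Fintype V] [DecidableEq V]
    (t : ℕ) (G : SimpleGraph V) (c : ℕ → ℝ) : ℝ :=
  sInf { x | ∃ f, IsIntDecomp t G f ∧ x = cliqueCost c f }

/-- `G` is complete multipartite: vertices can be assigned to parts so that
adjacency holds exactly between distinct parts. -/
def IsCompleteMultipartite {V : Type} [Fintype V] [DecidableEq V]
    (G : SimpleGraph V) : Prop :=
  ∃ p : V → ℕ, ∀ u v, G.Adj u v ↔ p u ≠ p v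

section MotzkinStraus

variable {V : Type}

lemma sum_mul_min_le (a : V → V → ℝ) (l : ℝ) (hdiag : ∀ u, a u u = 0) (K : Finset V)
    (hK : ∀ L ⊆ K, L.Nonempty → ∑ u ∈ L, ∑ v ∈ L, a u v ≤ 2 * l * ((#L : ℝ) - 1))
    (x : V → ℝ) (hx : ∀ u ∈ K, 0 ≤ x u) (j : V) (hj : j ∈ K) (hmax : ∀ u ∈ K, x u ≤ x j) :
    ∑ u ∈ K, ∑ v ∈ K, a u v * min (x u) (x v) ≤ 2 * l * (∑ u ∈ K, x u - x j) := by
  induction hn : #K generalizing K x with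
  | zero => simp_all
  | succ n ih =>
    by_cases hE : (K.erase j).Nonempty
    · obtain ⟨i, hi, himin⟩ := exists_min_image (K.erase j) x hE
      have hiK : i ∈ K := mem_of_mem_erase hi
      have hij : i ≠ j := ne_of_mem_erase hi
      have himin' : ∀ u ∈ K, x i ≤ x u := by
        intro u hu
        by_cases h : u = j
        · exact h ▸ hmax i hiK
        · exact himin u (mem_erase.2 ⟨h, hu⟩)
      have key := ih (K.erase i) (fun L hL => hK L (hL.trans (erase_subset _ _)))
        (fun u => x u - x i) (fun u hu => sub_nonneg.2 (himin' u (mem_of_mem_erase hu)))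
        (mem_erase.2 ⟨hij.symm, hj⟩) (fun u hu => by
          have := hmax u (mem_of_mem_erase hu); simpa using this)
        (by rw [card_erase_of_mem hiK]; omega)
      have h1 : ∑ u ∈ K, ∑ v ∈ K, a u v * min (x u) (x v)
          = x i * ∑ u ∈ K, ∑ v ∈ K, a u v
            + ∑ u ∈ K, ∑ v ∈ K, a u v * min (x u - x i) (x v - x i) := by
        rw [mul_sum, ← sum_add_distrib]
        refine sum_congr rfl fun u _ => ?_
        rw [mul_sum, ← sum_add_distrib]
        refine sum_congr rfl fun v _ => ?_
        rw [min_sub_sub_right]; ring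
      have h2 : ∑ u ∈ K, ∑ v ∈ K, a u v * min (x u - x i) (x v - x i)
          = ∑ u ∈ K.erase i, ∑ v ∈ K.erase i, a u v * min (x u - x i) (x v - x i) := by
        rw [← sum_erase_add K _ hiK]
        have h0 : ∑ v ∈ K, a i v * min (x i - x i) (x v - x i) = 0 :=
          sum_eq_zero fun v hv => by
            rw [sub_self, min_eq_left (sub_nonneg.2 (himin' v hv)), mul_zero]
        rw [h0, add_zero]
        refine sum_congr rfl fun u hu => ?_
        rw [← sum_erase_add K _ hiK, sub_self,
          min_eq_right (sub_nonneg.2 (himin' u (mem_of_mem_erase hu))), mul_zero, add_zero]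
      have h3 : ∑ u ∈ K.erase i, (x u - x i) = ∑ u ∈ K, x u - #K * x i := by
        rw [← sum_erase_add K x hiK, sum_sub_distrib, sum_const, card_erase_of_mem hiK, hn]
        rw [Nat.add_sub_cancel, nsmul_eq_mul]; push_cast; ring
      have h4 := mul_le_mul_of_nonneg_left (hK K subset_rfl ⟨j, hj⟩) (hx i hiK)
      rw [h1, h2]
      rw [h3] at key
      nlinarith [key, h4]
    · have hKj : K = {j} := by
        rw [not_nonempty_iff_eq_empty] at hE
        rw [← insert_erase hj, hE]; rfl
      subst hKj
      simp [hdiag]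

/-- Motzkin–Straus type bound: a nonnegative symmetric weighting whose restriction to each clique of
its support weighs at most `l (|K| - 1)` has Lagrangian at most `l / 4`. -/
lemma quadratic_form_le (a : V → V → ℝ) (l : ℝ) (hl : 0 ≤ l) (hdiag : ∀ u, a u u = 0)
    (hsymm : ∀ u v, a u v = a v u) (ha : ∀ u v, 0 ≤ a u v)
    (hK : ∀ K : Finset V, K.Nonempty → (∀ u ∈ K, ∀ v ∈ K, u ≠ v → 0 < a u v) →
      ∑ u ∈ K, ∑ v ∈ K, a u v ≤ 2 * l * ((#K : ℝ) - 1))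
    (K : Finset V) (x : V → ℝ) (hx : ∀ u ∈ K, 0 ≤ x u) :
    ∑ u ∈ K, ∑ v ∈ K, a u v * (x u * x v) ≤ l / 2 * (∑ u ∈ K, x u) ^ 2 := by
  induction hn : #K generalizing K x with
  | zero => simp_all
  | succ n ih =>
    by_cases hcl : ∀ u ∈ K, ∀ v ∈ K, u ≠ v → 0 < a u v
    · have hne : K.Nonempty := card_pos.1 (by omega)
      obtain ⟨j, hj, hmax⟩ := exists_max_image K x hne
      have h1 := sum_mul_min_le a l hdiag K
        (fun L hL hLn => hK L hLn fun u hu v hv => hcl u (hL hu) v (hL hv)) x hx j hj hmax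
      have h2 : ∑ u ∈ K, ∑ v ∈ K, a u v * (x u * x v)
          ≤ x j * ∑ u ∈ K, ∑ v ∈ K, a u v * min (x u) (x v) := by
        rw [mul_sum]
        refine sum_le_sum fun u hu => ?_
        rw [mul_sum]
        refine sum_le_sum fun v hv => ?_
        have : x u * x v ≤ x j * min (x u) (x v) := by
          rcases le_total (x u) (x v) with h | h
          · rw [min_eq_left h]; nlinarith [hx u hu, hmax v hv]
          · rw [min_eq_right h]; nlinarith [hx v hv, hmax u hu]
        nlinarith [ha u v]
      have h3 := mul_le_mul_of_nonneg_left h1 (hx j hj)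
      nlinarith [mul_nonneg hl (sq_nonneg (∑ u ∈ K, x u - 2 * x j))]
    · push Not at hcl
      obtain ⟨u, hu, v, hv, huv, hauv⟩ := hcl
      have hauv : a u v = 0 := le_antisymm hauv (ha u v)
      -- moving all the weight of `q` to `p` does not decrease the form when `p` is the better one
      have move : ∀ p ∈ K, ∀ q ∈ K, p ≠ q → a p q = 0 →
          ∑ w ∈ K, a q w * x w ≤ ∑ w ∈ K, a p w * x w →
          ∑ u ∈ K, ∑ v ∈ K, a u v * (x u * x v) ≤ l / 2 * (∑ u ∈ K, x u) ^ 2 := by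
        intro p hp q hq hpq hapq hle
        have hpE : p ∈ K.erase q := mem_erase.2 ⟨hpq, hp⟩
        set y : V → ℝ := fun w => x w + if w = p then x q else 0 with hy
        have key := ih (K.erase q) y (fun w hw => by
            have h1 := hx w (mem_of_mem_erase hw)
            have h2 := hx q hq
            simp only [hy]; split_ifs <;> linarith)
          (by rw [card_erase_of_mem hq]; omega)
        have hsum : ∑ w ∈ K.erase q, y w = ∑ w ∈ K, x w := by
          rw [← sum_erase_add K x hq, sum_add_distrib, sum_ite_eq' (K.erase q) p, if_pos hpE]
        rw [hsum] at key
        refine le_trans ?_ key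
        set D := K.erase q with hD
        have e1 : ∑ u ∈ K, ∑ v ∈ K, a u v * (x u * x v)
            = ∑ u ∈ D, ∑ v ∈ D, a u v * (x u * x v) + 2 * (x q * ∑ w ∈ D, a q w * x w) := by
          rw [← sum_erase_add K _ hq]
          have : ∀ u, ∑ v ∈ K, a u v * (x u * x v)
              = ∑ v ∈ D, a u v * (x u * x v) + a u q * (x u * x q) := fun u =>
            (sum_erase_add K _ hq).symm
          simp only [this, sum_add_distrib, hdiag, zero_mul, add_zero, mul_sum]
          rw [← hD, add_assoc, ← sum_add_distrib]
          congr 1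
          refine sum_congr rfl fun w _ => ?_
          rw [hsymm w q]; ring
        have e2 : ∑ u ∈ D, ∑ v ∈ D, a u v * (y u * y v)
            = ∑ u ∈ D, ∑ v ∈ D, a u v * (x u * x v) + 2 * (x q * ∑ w ∈ D, a p w * x w) := by
          have : ∀ u v, a u v * (y u * y v) = a u v * (x u * x v)
              + (if v = p then a u v * x u * x q else 0)
              + (if u = p then a u v * x v * x q else 0)
              + (if u = p then (if v = p then a u v * x q * x q else 0) else 0) := by
            intro u v; simp only [hy]; split_ifs <;> ring
          simp only [this, sum_add_distrib, sum_ite_eq', if_pos hpE]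
          have hs : ∀ u, ∑ v ∈ D, (if u = p then a u v * x v * x q else 0)
              = if u = p then ∑ v ∈ D, a u v * x v * x q else 0 := by
            intro u; split_ifs <;> simp
          have hs' : ∀ u, ∑ v ∈ D, (if u = p then (if v = p then a u v * x q * x q else 0) else 0)
              = if u = p then a u p * x q * x q else 0 := by
            intro u; split_ifs <;> simp [hpE]
          simp only [hs, hs', sum_ite_eq', if_pos hpE, hdiag, zero_mul, add_zero, mul_sum]
          rw [add_assoc, ← sum_add_distrib]
          congr 1
          refine sum_congr rfl fun w _ => ?_
          rw [hsymm w p]; ring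
        have e3 : ∑ w ∈ K, a q w * x w = ∑ w ∈ D, a q w * x w := by
          rw [← sum_erase_add K _ hq, hdiag, zero_mul, add_zero]
        have e4 : ∑ w ∈ K, a p w * x w = ∑ w ∈ D, a p w * x w := by
          rw [← sum_erase_add K _ hq, hapq, zero_mul, add_zero]
        rw [e1, e2]
        rw [e3, e4] at hle
        nlinarith [mul_le_mul_of_nonneg_left hle (hx q hq)]
      rcases le_total (∑ w ∈ K, a v w * x w) (∑ w ∈ K, a u w * x w) with h | h
      · exact move u hu v hv huv hauv h
      · exact move v hv u hu huv.symm (hsymm u v ▸ hauv) h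

end MotzkinStraus

lemma sum_pairs_eq_two_mul {V : Type} (b : Finset V → ℝ) (K : Finset V) :
    ∑ u ∈ K, ∑ v ∈ K, (if u = v then 0 else b {u, v}) = 2 * ∑ T ∈ K.powersetCard 2, b T := by
  induction K using Finset.induction_on with
  | empty => rw [powersetCard_eq_empty.2 (by simp)]; simp
  | insert a K ha ih =>
    rw [sum_insert ha, powersetCard_succ_insert ha, sum_union, mul_add, ← ih]
    · simp only [sum_insert ha, sum_add_distrib, if_true]
      have h1 : ∑ v ∈ K, (if a = v then 0 else b {a, v}) = ∑ v ∈ K, b {a, v} :=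
        sum_congr rfl fun v hv => if_neg (ne_of_mem_of_not_mem hv ha).symm
      have h2 : ∑ v ∈ K, (if v = a then 0 else b {v, a}) = ∑ v ∈ K, b {a, v} :=
        sum_congr rfl fun v hv => by rw [if_neg (ne_of_mem_of_not_mem hv ha), pair_comm]
      have h3 : ∑ T ∈ (powersetCard 1 K).image (insert a), b T = ∑ v ∈ K, b {a, v} := by
        rw [powersetCard_one, sum_image, sum_map]
        · rfl
        · intro x hx y hy hxy
          simp only [coe_map, Set.mem_image, mem_coe, Function.Embedding.coeFn_mk] at hx hy
          obtain ⟨x, hx, rfl⟩ := hx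
          obtain ⟨y, hy, rfl⟩ := hy
          have : x ∈ insert a ({y} : Finset V) := hxy ▸ by simp
          rcases mem_insert.1 this with h | h
          · exact absurd (h ▸ hx) ha
          · rw [mem_singleton.1 h]
      rw [h1, h2, h3]; ring
    · rw [disjoint_left]
      intro T hT hT'
      obtain ⟨T', -, rfl⟩ := mem_image.1 hT'
      exact ha ((mem_powersetCard.1 hT).1 (mem_insert_self _ _))

/-- A finite family of weighted subsets (indexed by `index`) of a ground type `E`, containing a
singleton of cost at most `1` for each point; every member has between `1` and `r` points and costs
at most its cardinality. -/
structure PackingSystem (E ι : Type) (r : ℕ) where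
  supp : ι → Finset E
  cost : ι → ℝ
  index : Finset ι
  single : E → ι
  single_mem : ∀ v, single v ∈ index
  supp_single : ∀ v, supp (single v) = {v}
  cost_single : ∀ v, cost (single v) ≤ 1
  cost_nonneg : ∀ i ∈ index, 0 ≤ cost i
  cost_le : ∀ i ∈ index, cost i ≤ #(supp i)
  supp_nonempty : ∀ i ∈ index, (supp i).Nonempty
  card_le : ∀ i ∈ index, #(supp i) ≤ r

namespace PackingSystem

variable {E ι : Type} {r : ℕ} (S : PackingSystem E ι r)

/-- Total weight of the members containing `v`. -/
noncomputable def deg (f : ι → ℝ) (v : E) : ℝ :=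
  ∑ i ∈ S.index, if v ∈ S.supp i then f i else 0

/-- Total weight of the members containing both `u` and `v`. -/
noncomputable def codeg (f : ι → ℝ) (u v : E) : ℝ :=
  ∑ i ∈ S.index, if u ∈ S.supp i ∧ v ∈ S.supp i then f i else 0

/-- Total cost of a weighting. -/
noncomputable def total (f : ι → ℝ) : ℝ :=
  ∑ i ∈ S.index, S.cost i * f i

/-- A nonnegative weighting of the members contained in `U` with codegrees at most `δ`. -/
structure IsWeighting (U : Finset E) (δ : ℝ) (f : ι → ℝ) : Prop where
  nonneg : ∀ i, 0 ≤ f i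
  supp_subset : ∀ i ∈ S.index, f i ≠ 0 → S.supp i ⊆ U
  codeg_le : ∀ u v, u ≠ v → S.codeg f u v ≤ δ

/-- A fractional partition of `U` with codegrees at most `δ`. -/
structure IsFracPartition (U : Finset E) (δ : ℝ) (f : ι → ℝ) : Prop
    extends S.IsWeighting U δ f where
  deg_eq : ∀ v ∈ U, S.deg f v = 1

/-- `U` can be partitioned into members of total cost at most `κ`. -/
def HasPartition (U : Finset E) (κ : ℝ) : Prop :=
  ∃ M ⊆ S.index, (∀ i ∈ M, ∀ j ∈ M, i ≠ j → Disjoint (S.supp i) (S.supp j)) ∧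
    M.biUnion S.supp = U ∧ ∑ i ∈ M, S.cost i ≤ κ

variable {S} {U : Finset E} {δ : ℝ} {f : ι → ℝ}

lemma IsWeighting.sum_mul_deg (hf : S.IsWeighting U δ f) (g : E → ℝ) :
    ∑ v ∈ U, g v * S.deg f v = ∑ i ∈ S.index, f i * ∑ v ∈ S.supp i, g v := by
  simp only [deg, mul_sum]
  rw [sum_comm]
  refine sum_congr rfl fun i hi => ?_
  by_cases h : f i = 0
  · simp [h]
  · rw [← sum_subset (hf.supp_subset i hi h) (fun v _ hv => by simp [hv])]
    exact sum_congr rfl fun v hv => by rw [if_pos hv, mul_comm]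

lemma IsFracPartition.sum_card_mul (hf : S.IsFracPartition U δ f) :
    ∑ i ∈ S.index, f i * #(S.supp i) = #U := by
  have := hf.sum_mul_deg (fun _ => 1)
  simp only [sum_const, nsmul_eq_mul, mul_one, one_mul] at this
  rw [← this, sum_congr rfl hf.deg_eq]; simp

lemma IsFracPartition.total_le (hf : S.IsFracPartition U δ f) : S.total f ≤ #U := by
  rw [← hf.sum_card_mul]
  refine sum_le_sum fun i hi => ?_
  rw [mul_comm]
  exact mul_le_mul_of_nonneg_left (S.cost_le i hi) (hf.nonneg i)

lemma IsWeighting.total_nonneg (hf : S.IsWeighting U δ f) : 0 ≤ S.total f :=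
  sum_nonneg fun i hi => mul_nonneg (S.cost_nonneg i hi) (hf.nonneg i)

lemma IsWeighting.deg_nonneg (hf : S.IsWeighting U δ f) (v : E) : 0 ≤ S.deg f v :=
  sum_nonneg fun i _ => by split_ifs; exacts [hf.nonneg i, le_rfl]

lemma one_sub_prod_le_sum {α : Type} (s : Finset α) (g : α → ℝ) (h0 : ∀ a, 0 ≤ g a)
    (h1 : ∀ a, g a ≤ 1) : 1 - ∏ a ∈ s, g a ≤ ∑ a ∈ s, (1 - g a) := by
  induction s using Finset.induction_on with
  | empty => simp
  | insert a s ha ih =>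
    rw [prod_insert ha, sum_insert ha]
    have hp0 : 0 ≤ ∏ a ∈ s, g a := prod_nonneg fun a _ => h0 a
    have hp1 : ∏ a ∈ s, g a ≤ 1 := prod_le_one (fun a _ => h0 a) fun a _ => h1 a
    nlinarith [mul_nonneg (sub_nonneg.2 (h1 a)) (sub_nonneg.2 hp1)]

/-- A weighting can be turned into a fractional partition at the price of the total deviation of
its degrees from `1`. -/
lemma IsWeighting.exists_isFracPartition (hr : 1 ≤ r) (hf : S.IsWeighting U δ f) :
    ∃ g, S.IsFracPartition U δ g ∧
      S.total g ≤ S.total f + r * ∑ v ∈ U, |S.deg f v - 1| := by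
  have hr' : (1 : ℝ) ≤ r := by exact_mod_cast hr
  set X := S.deg f with hX
  have hX0 : ∀ v, 0 ≤ X v := hf.deg_nonneg
  set φ : E → ℝ := fun v => (max 1 (X v))⁻¹ with hφ
  have hm1 : ∀ v, 1 ≤ max 1 (X v) := fun v => le_max_left _ _
  have hφ0 : ∀ v, 0 ≤ φ v := fun v => inv_nonneg.2 (zero_le_one.trans (hm1 v))
  have hφ1 : ∀ v, φ v ≤ 1 := fun v => inv_le_one_of_one_le₀ (hm1 v)
  have hφX : ∀ v, φ v * X v ≤ 1 := fun v => by
    rw [hφ, inv_mul_le_iff₀ (by linarith [hm1 v]), mul_one]; exact le_max_right _ _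
  have hφX' : ∀ v, (1 - φ v) * X v = max 1 (X v) - 1 := fun v => by
    have := hm1 v
    simp only [hφ]
    rcases le_total (X v) 1 with h | h
    · simp [max_eq_left h]
    · rw [max_eq_right h] at this ⊢
      field_simp
  set h : ι → ℝ := fun i => f i * ∏ v ∈ S.supp i, φ v with hh
  have hp0 : ∀ i, 0 ≤ ∏ v ∈ S.supp i, φ v := fun i => prod_nonneg fun v _ => hφ0 v
  have hp1 : ∀ i, ∏ v ∈ S.supp i, φ v ≤ 1 := fun i =>
    prod_le_one (fun v _ => hφ0 v) fun v _ => hφ1 v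
  have hh0 : ∀ i, 0 ≤ h i := fun i => mul_nonneg (hf.nonneg i) (hp0 i)
  have hhf : ∀ i, h i ≤ f i := fun i => mul_le_of_le_one_right (hf.nonneg i) (hp1 i)
  have hhW : S.IsWeighting U δ h := by
    refine ⟨hh0, fun i hi hne => hf.supp_subset i hi fun h0 => hne (by simp [hh, h0]),
      fun u v huv => le_trans (sum_le_sum fun i _ => ?_) (hf.codeg_le u v huv)⟩
    split_ifs
    exacts [hhf i, le_rfl]
  have hdeg1 : ∀ v, S.deg h v ≤ 1 := by
    intro v
    refine le_trans ?_ (hφX v)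
    rw [hX, deg, deg, mul_sum]
    refine sum_le_sum fun i _ => ?_
    split_ifs with hv
    · rw [hh, mul_comm (φ v)]
      refine mul_le_mul_of_nonneg_left ?_ (hf.nonneg i)
      rw [← mul_prod_erase _ _ hv]
      exact mul_le_of_le_one_right (hφ0 v) (prod_le_one (fun v _ => hφ0 v) fun v _ => hφ1 v)
    · simp
  set d : E → ℝ := fun v => 1 - S.deg h v with hd
  have hd0 : ∀ v, 0 ≤ d v := fun v => sub_nonneg.2 (hdeg1 v)
  set e : ι → ℝ := fun i => ∑ v ∈ U, if S.single v = i then d v else 0 with he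
  have he0 : ∀ i, 0 ≤ e i := fun i => sum_nonneg fun v _ => by
    split_ifs; exacts [hd0 v, le_rfl]
  have hsum_e : ∀ F : ι → ℝ, ∑ i ∈ S.index, F i * e i = ∑ v ∈ U, F (S.single v) * d v := by
    intro F
    simp only [he, mul_sum]
    rw [sum_comm]
    refine sum_congr rfl fun v _ => ?_
    simp [S.single_mem]
  have hdegadd : ∀ v, S.deg (h + e) v = S.deg h v + S.deg e v := fun v => by
    simp only [deg, ← sum_add_distrib, Pi.add_apply]
    exact sum_congr rfl fun i _ => by split_ifs <;> simp
  have hcodegadd : ∀ u v, S.codeg (h + e) u v = S.codeg h u v + S.codeg e u v := fun u v => by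
    simp only [codeg, ← sum_add_distrib, Pi.add_apply]
    exact sum_congr rfl fun i _ => by split_ifs <;> simp
  have hdege : ∀ v ∈ U, S.deg e v = d v := by
    intro v hv
    have := hsum_e fun i => if v ∈ S.supp i then 1 else 0
    simp only [ite_mul, one_mul, zero_mul, S.supp_single, mem_singleton] at this
    rw [deg, this]; simp [hv]
  have hcodege : ∀ u v, u ≠ v → S.codeg e u v = 0 := by
    intro u v huv
    have := hsum_e fun i => if u ∈ S.supp i ∧ v ∈ S.supp i then 1 else 0
    simp only [ite_mul, one_mul, zero_mul, S.supp_single, mem_singleton] at this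
    rw [codeg, this]
    refine sum_eq_zero fun w _ => if_neg ?_
    rintro ⟨rfl, rfl⟩; exact huv rfl
  refine ⟨h + e, ⟨⟨fun i => add_nonneg (hh0 i) (he0 i), ?_, ?_⟩, ?_⟩, ?_⟩
  · intro i hi hne
    by_cases hhi : h i = 0
    · have : e i ≠ 0 := by simpa [hhi] using hne
      obtain ⟨v, hv, hv'⟩ := exists_ne_zero_of_sum_ne_zero this
      have : S.single v = i := by by_contra hc; simp [hc] at hv'
      rw [← this, S.supp_single]; simpa using hv
    · exact hhW.supp_subset i hi hhi
  · intro u v huv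
    rw [hcodegadd, hcodege u v huv, add_zero]
    exact hhW.codeg_le u v huv
  · intro v hv
    rw [hdegadd, hdege v hv]; simp [hd]
  · have t1 : S.total (h + e) = S.total h + ∑ v ∈ U, S.cost (S.single v) * d v := by
      rw [← hsum_e S.cost, total, total, ← sum_add_distrib]
      exact sum_congr rfl fun i _ => by simp [mul_add]
    have t2 : S.total h ≤ S.total f :=
      sum_le_sum fun i hi => mul_le_mul_of_nonneg_left (hhf i) (S.cost_nonneg i hi)
    have t3 : ∑ v ∈ U, S.cost (S.single v) * d v ≤ ∑ v ∈ U, d v :=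
      sum_le_sum fun v _ => mul_le_of_le_one_left (hd0 v) (S.cost_single v)
    have s1 := hf.sum_mul_deg fun _ => 1
    have s2 := hhW.sum_mul_deg fun _ => 1
    have s3 := hf.sum_mul_deg fun v => 1 - φ v
    simp only [one_mul, sum_const, nsmul_eq_mul, mul_one] at s1 s2
    have t4 : ∑ i ∈ S.index, f i * #(S.supp i) - ∑ i ∈ S.index, h i * #(S.supp i)
        ≤ r * ∑ i ∈ S.index, f i * ∑ v ∈ S.supp i, (1 - φ v) := by
      rw [← sum_sub_distrib, mul_sum]
      refine sum_le_sum fun i hi => ?_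
      have c1 : (#(S.supp i) : ℝ) ≤ r := by exact_mod_cast S.card_le i hi
      have c2 := one_sub_prod_le_sum (S.supp i) φ hφ0 hφ1
      have c3 : 0 ≤ 1 - ∏ v ∈ S.supp i, φ v := sub_nonneg.2 (hp1 i)
      calc f i * #(S.supp i) - h i * #(S.supp i)
          = f i * (#(S.supp i) * (1 - ∏ v ∈ S.supp i, φ v)) := by simp only [hh]; ring
        _ ≤ f i * (r * ∑ v ∈ S.supp i, (1 - φ v)) := by
            refine mul_le_mul_of_nonneg_left ?_ (hf.nonneg i)
            exact mul_le_mul c1 c2 c3 (by positivity)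
        _ = _ := by ring
    rw [← s3, ← s1, ← s2] at t4
    have t5 : ∑ v ∈ U, d v ≤ r * ∑ v ∈ U, |X v - 1| := by
      have : ∑ v ∈ U, d v = ∑ v ∈ U, (1 - X v) + (∑ v ∈ U, X v - ∑ v ∈ U, S.deg h v) := by
        rw [← sum_sub_distrib, ← sum_add_distrib]
        exact sum_congr rfl fun v _ => by simp only [hd]; ring
      rw [this]
      refine (add_le_add_right t4 _).trans ?_
      rw [mul_sum, mul_sum, ← sum_add_distrib]
      refine sum_le_sum fun v _ => ?_
      rw [← hX, hφX' v]
      rcases le_total (X v) 1 with h | h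
      · rw [max_eq_left h, abs_of_nonpos (by linarith)]
        nlinarith
      · rw [max_eq_right h, abs_of_nonneg (by linarith)]
        nlinarith
    linarith

end PackingSystem

namespace PackingSystem

variable {E ι : Type} {r : ℕ} {S : PackingSystem E ι r}

lemma codeg_le_deg {f : ι → ℝ} (hf : ∀ i, 0 ≤ f i) (u v : E) : S.codeg f u v ≤ S.deg f u :=
  sum_le_sum fun i _ => by
    have := hf i
    split_ifs <;> simp_all

/-- Linear programming duality for fractional partitions, up to an arbitrarily small error. -/
lemma exists_isFracPartition_of_dual [Fintype E] (hr : 1 ≤ r) (U : Finset E) (τ : ℝ)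
    (hdual : ∀ (w : E → ℝ) (l : ℝ), 0 ≤ l →
      (∀ i ∈ S.index, S.supp i ⊆ U → ∑ v ∈ S.supp i, w v ≤ l * S.cost i) →
      ∑ v ∈ U, w v ≤ l * τ) {η : ℝ} (hη : 0 < η) :
    ∃ g, S.IsFracPartition U 1 g ∧ S.total g ≤ τ + η := by
  set C : Set ((E → ℝ) × ℝ) := {x | ∃ g : ι → ℝ, (∀ i, 0 ≤ g i) ∧
    (∀ i ∈ S.index, g i ≠ 0 → S.supp i ⊆ U) ∧ x.1 = S.deg g ∧ S.total g ≤ x.2} with hC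
  have hdeg_smul : ∀ (a : ℝ) (g : ι → ℝ), S.deg (a • g) = a • S.deg g := fun a g => by
    ext v
    simp only [deg, Pi.smul_apply, smul_eq_mul, mul_sum]
    exact sum_congr rfl fun i _ => by split_ifs <;> simp
  have hdeg_add : ∀ (g h : ι → ℝ), S.deg (g + h) = S.deg g + S.deg h := fun g h => by
    ext v
    simp only [deg, Pi.add_apply, ← sum_add_distrib]
    exact sum_congr rfl fun i _ => by split_ifs <;> simp
  have htot_smul : ∀ (a : ℝ) (g : ι → ℝ), S.total (a • g) = a * S.total g := fun a g => by
    simp only [total, Pi.smul_apply, smul_eq_mul, mul_sum]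
    exact sum_congr rfl fun i _ => by ring
  have htot_add : ∀ (g h : ι → ℝ), S.total (g + h) = S.total g + S.total h := fun g h => by
    simp only [total, Pi.add_apply, ← sum_add_distrib]
    exact sum_congr rfl fun i _ => by ring
  have hsmul : ∀ x ∈ C, ∀ a : ℝ, 0 ≤ a → a • x ∈ C := by
    rintro x ⟨g, hg0, hgs, hgd, hgt⟩ a ha
    refine ⟨a • g, fun i => mul_nonneg ha (hg0 i),
      fun i hi hne => hgs i hi fun h => hne (by simp [h]), ?_, ?_⟩
    · rw [hdeg_smul, Prod.smul_fst, hgd]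
    · rw [htot_smul, Prod.smul_snd, smul_eq_mul]
      exact mul_le_mul_of_nonneg_left hgt ha
  have hadd : ∀ x ∈ C, ∀ y ∈ C, x + y ∈ C := by
    rintro x ⟨g, hg0, hgs, hgd, hgt⟩ y ⟨h, hh0, hhs, hhd, hht⟩
    refine ⟨g + h, fun i => add_nonneg (hg0 i) (hh0 i), fun i hi hne => ?_, ?_, ?_⟩
    · by_cases hgi : g i = 0
      · exact hhs i hi fun hhi => hne (by simp [hgi, hhi])
      · exact hgs i hi hgi
    · rw [hdeg_add, Prod.fst_add, hgd, hhd]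
    · rw [htot_add, Prod.snd_add]; exact add_le_add hgt hht
  have hconv : Convex ℝ C := fun x hx y hy a b ha hb _ =>
    hadd _ (hsmul x hx a ha) _ (hsmul y hy b hb)
  set P : (E → ℝ) × ℝ := (fun v => if v ∈ U then 1 else 0, τ) with hP
  have hmem : P ∈ closure C := by
    by_contra hnot
    obtain ⟨F, u, hFC, hFP⟩ := geometric_hahn_banach_closed_point hconv.closure
      isClosed_closure hnot
    have h0C : (0 : (E → ℝ) × ℝ) ∈ C :=
      ⟨0, fun _ => le_rfl, fun i _ h => absurd rfl h, by ext v; simp [deg], by simp [total]⟩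
    have hu : 0 < u := by simpa using hFC 0 (subset_closure h0C)
    have hle : ∀ x ∈ C, F x ≤ 0 := by
      intro x hx
      by_contra hpos
      push Not at hpos
      have := hFC ((u / F x) • x) (subset_closure (hsmul x hx _ (by positivity)))
      rw [map_smul, smul_eq_mul, div_mul_cancel₀ _ hpos.ne'] at this
      exact lt_irrefl _ this
    set w : E → ℝ := fun v => F (Pi.single v 1, 0) with hw
    set l : ℝ := - F (0, 1) with hl
    have hF : ∀ x : (E → ℝ) × ℝ, F x = ∑ v, x.1 v * w v - l * x.2 := by
      intro x
      have hx : x = ∑ v, x.1 v • ((Pi.single v 1, 0) : (E → ℝ) × ℝ) + x.2 • (0, 1) := by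
        ext v
        · simp [Prod.fst_sum, Finset.sum_apply, Pi.single_apply]
        · simp [Prod.snd_sum]
      conv_lhs => rw [hx]
      simp only [map_add, map_sum, map_smul, smul_eq_mul, hw, hl]
      ring
    have hl0 : 0 ≤ l := by
      have := hle (0, 1) ⟨0, fun _ => le_rfl, fun i _ h => absurd rfl h, by ext v; simp [deg],
        by simp [total]⟩
      simp only [hl]; linarith
    have hw' : ∀ i ∈ S.index, S.supp i ⊆ U → ∑ v ∈ S.supp i, w v ≤ l * S.cost i := by
      intro i hi hiU
      have := hle (fun v => if v ∈ S.supp i then 1 else 0, S.cost i)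
        ⟨Pi.single i 1, fun j => by
          by_cases h : j = i
          · subst h; simp
          · simp [h], fun j _ hj => by
          by_cases h : j = i
          · exact h ▸ hiU
          · simp [h] at hj, by
          ext v
          rw [deg, sum_eq_single i (fun j _ hj => by simp [hj]) (fun h => absurd hi h)]
          simp, by
          rw [total, sum_eq_single i (fun j _ hj => by simp [hj]) (fun h => absurd hi h)]
          simp⟩
      rw [hF] at this
      simp only [ite_mul, one_mul, zero_mul, sum_ite_mem, univ_inter] at this
      linarith
    have h1 := hdual w l hl0 hw'
    rw [hF] at hFP
    simp only [hP, ite_mul, one_mul, zero_mul, sum_ite_mem, univ_inter] at hFP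
    linarith
  set κ : ℝ := η / (1 + r * #U) with hκ
  have hden : (0 : ℝ) < 1 + r * #U := by positivity
  have hκ0 : 0 < κ := by positivity
  obtain ⟨x, ⟨g, hg0, hgs, hgd, hgt⟩, hxP⟩ := Metric.mem_closure_iff.1 hmem κ hκ0
  rw [Prod.dist_eq, max_lt_iff] at hxP
  have hdist : ∀ v ∈ U, |S.deg g v - 1| ≤ κ := by
    intro v hv
    have := (dist_le_pi_dist P.1 x.1 v).trans hxP.1.le
    rw [Real.dist_eq, abs_sub_comm, hgd] at this
    simpa [hP, hv] using this
  have htot : S.total g ≤ τ + κ := by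
    have := (le_abs_self _).trans ((abs_sub_comm _ _).le.trans hxP.2.le)
    simp only [hP] at this
    linarith
  have hcodeg0 : S.IsWeighting U (S.total g + ∑ i ∈ S.index, g i) g := by
    refine ⟨hg0, hgs, fun u v _ => ?_⟩
    have h1 : 0 ≤ S.total g := sum_nonneg fun i hi => mul_nonneg (S.cost_nonneg i hi) (hg0 i)
    have h2 : S.codeg g u v ≤ ∑ i ∈ S.index, g i := sum_le_sum fun i _ => by
      split_ifs; exacts [le_rfl, hg0 i]
    linarith
  obtain ⟨h, hh, hht⟩ := hcodeg0.exists_isFracPartition hr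
  refine ⟨h, ⟨⟨hh.nonneg, hh.supp_subset, fun u v _ => ?_⟩, hh.deg_eq⟩, ?_⟩
  · by_cases hu : u ∈ U
    · exact (codeg_le_deg hh.nonneg u v).trans (hh.deg_eq u hu).le
    · refine le_trans (sum_nonpos fun i hi => ?_) zero_le_one
      split_ifs with hi'
      · by_contra hc
        exact hu (hh.supp_subset i hi (fun h0 => hc h0.le) hi'.1)
      · exact le_rfl
  · refine hht.trans ?_
    have h1 : ∑ v ∈ U, |S.deg g v - 1| ≤ #U * κ := by
      rw [← nsmul_eq_mul]; exact sum_le_card_nsmul _ _ _ hdist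
    have h2 : κ + r * (#U * κ) = η := by
      rw [hκ]; field_simp
    have h3 := mul_le_mul_of_nonneg_left h1 (Nat.cast_nonneg (α := ℝ) r)
    linarith

end PackingSystem

section RandomSubset

variable {ι : Type}

/-- Expectation of `g R`, where `R` is the random subset of `H` containing each `i` independently
with probability `q i`. -/
noncomputable def subsetExp (H : Finset ι) (q : ι → ℝ) (g : Finset ι → ℝ) : ℝ :=
  ∑ R ∈ H.powerset, ((∏ i ∈ R, q i) * ∏ i ∈ H \ R, (1 - q i)) * g R

variable {H : Finset ι} {q : ι → ℝ}

lemma subsetExp_add (g h : Finset ι → ℝ) :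
    subsetExp H q (fun R => g R + h R) = subsetExp H q g + subsetExp H q h := by
  simp only [subsetExp, mul_add, sum_add_distrib]

lemma subsetExp_const_mul (c : ℝ) (g : Finset ι → ℝ) :
    subsetExp H q (fun R => c * g R) = c * subsetExp H q g := by
  simp only [subsetExp, mul_sum]
  exact sum_congr rfl fun R _ => by ring

lemma subsetExp_sum {α : Type} (s : Finset α) (g : α → Finset ι → ℝ) :
    subsetExp H q (fun R => ∑ a ∈ s, g a R) = ∑ a ∈ s, subsetExp H q (g a) := by
  simp only [subsetExp, mul_sum]
  exact sum_comm

lemma subsetExp_indicator {A B : Finset ι} (hA : A ⊆ H) (hB : B ⊆ H) (hAB : Disjoint A B) :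
    subsetExp H q (fun R => if A ⊆ R ∧ Disjoint B R then 1 else 0)
      = (∏ i ∈ A, q i) * ∏ i ∈ B, (1 - q i) := by
  have h1 : ∏ i ∈ H, ((if i ∈ B then 0 else q i) + (if i ∈ A then 0 else 1 - q i))
      = (∏ i ∈ A, q i) * ∏ i ∈ B, (1 - q i) := by
    have : ∀ i ∈ H, ((if i ∈ B then 0 else q i) + (if i ∈ A then 0 else 1 - q i))
        = (if i ∈ A then q i else 1) * (if i ∈ B then 1 - q i else 1) := by
      intro i _
      have : i ∈ A → i ∉ B := fun h => disjoint_left.1 hAB h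
      split_ifs <;> simp_all
    rw [prod_congr rfl this, prod_mul_distrib, prod_ite_mem, prod_ite_mem,
      inter_eq_right.2 hA, inter_eq_right.2 hB]
  rw [← h1, prod_add, subsetExp]
  refine sum_congr rfl fun R _ => ?_
  by_cases hBR : Disjoint B R
  · rw [prod_congr rfl fun i hi => if_neg (disjoint_right.1 hBR hi)]
    by_cases hAR : A ⊆ R
    · rw [if_pos ⟨hAR, hBR⟩, mul_one,
        prod_congr rfl fun i hi => if_neg fun hiA => (mem_sdiff.1 hi).2 (hAR hiA)]
    · obtain ⟨i, hiA, hiR⟩ := not_subset.1 hAR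
      rw [if_neg fun h => hAR h.1, prod_eq_zero (i := i)
        (f := fun i => if i ∈ A then 0 else 1 - q i) (mem_sdiff.2 ⟨hA hiA, hiR⟩) (if_pos hiA)]
      simp
  · rw [if_neg fun h => hBR h.2]
    obtain ⟨i, hiB, hiR⟩ := not_disjoint_iff.1 hBR
    rw [prod_eq_zero (i := i) (f := fun i => if i ∈ B then 0 else q i) hiR (if_pos hiB)]
    simp

lemma subsetExp_const (c : ℝ) : subsetExp H q (fun _ => c) = c := by
  have := subsetExp_indicator (q := q) (empty_subset H) (empty_subset H) (disjoint_empty_left _)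
  simp only [empty_subset, disjoint_empty_left, and_self, if_true, prod_empty, mul_one] at this
  have h := subsetExp_const_mul (H := H) (q := q) c (fun _ => 1)
  rw [this] at h
  simpa using h

/-- Some outcome of positive probability does not exceed the expectation. -/
lemma exists_le_of_subsetExp_le (hq0 : ∀ i, 0 ≤ q i) (hq1 : ∀ i, q i ≤ 1) {g : Finset ι → ℝ}
    {t : ℝ} (h : subsetExp H q g ≤ t) : ∃ R ⊆ H, (∀ i ∈ R, q i ≠ 0) ∧ g R ≤ t := by
  by_contra! hcon
  have hw : ∀ R, 0 ≤ (∏ i ∈ R, q i) * ∏ i ∈ H \ R, (1 - q i) := fun R =>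
    mul_nonneg (prod_nonneg fun i _ => hq0 i) (prod_nonneg fun i _ => sub_nonneg.2 (hq1 i))
  have hle : ∀ R ∈ H.powerset, ((∏ i ∈ R, q i) * ∏ i ∈ H \ R, (1 - q i)) * t
      ≤ ((∏ i ∈ R, q i) * ∏ i ∈ H \ R, (1 - q i)) * g R := by
    intro R hR
    by_cases h0 : ∀ i ∈ R, q i ≠ 0
    · exact mul_le_mul_of_nonneg_left (hcon R (mem_powerset.1 hR) h0).le (hw R)
    · push Not at h0
      obtain ⟨i, hi, hqi⟩ := h0
      simp [prod_eq_zero hi hqi]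
  have h1 := subsetExp_const (H := H) (q := q) 1
  have hex : ∃ R ∈ H.powerset, 0 < (∏ i ∈ R, q i) * ∏ i ∈ H \ R, (1 - q i) := by
    by_contra! hn
    have : subsetExp H q (fun _ => 1) ≤ 0 := sum_nonpos fun R hR => by simpa using hn R hR
    linarith
  obtain ⟨R, hR, hpos⟩ := hex
  have h0 : ∀ i ∈ R, q i ≠ 0 := fun i hi hqi => by simp [prod_eq_zero hi hqi] at hpos
  have : subsetExp H q (fun _ => t) < subsetExp H q g :=
    sum_lt_sum hle ⟨R, hR, mul_lt_mul_of_pos_left (hcon R (mem_powerset.1 hR) h0) hpos⟩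
  rw [subsetExp_const] at this
  linarith

end RandomSubset

namespace PackingSystem

variable {E ι : Type} {r : ℕ} {S : PackingSystem E ι r} {U : Finset E} {δ : ℝ} {f : ι → ℝ}

lemma HasPartition.union {U₁ U₂ : Finset E} {κ₁ κ₂ : ℝ} (hU : Disjoint U₁ U₂)
    (h₁ : S.HasPartition U₁ κ₁) (h₂ : S.HasPartition U₂ κ₂) :
    S.HasPartition (U₁ ∪ U₂) (κ₁ + κ₂) := by
  obtain ⟨M₁, hM₁, hd₁, rfl, hc₁⟩ := h₁
  obtain ⟨M₂, hM₂, hd₂, rfl, hc₂⟩ := h₂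
  have hcross : ∀ i ∈ M₁, ∀ j ∈ M₂, Disjoint (S.supp i) (S.supp j) := fun i hi j hj =>
    disjoint_of_subset_left (subset_biUnion_of_mem S.supp hi)
      (disjoint_of_subset_right (subset_biUnion_of_mem S.supp hj) hU)
  refine ⟨M₁ ∪ M₂, union_subset hM₁ hM₂, ?_, ?_, ?_⟩
  · intro i hi j hj hij
    rcases mem_union.1 hi with hi | hi <;> rcases mem_union.1 hj with hj | hj
    · exact hd₁ i hi j hj hij
    · exact hcross i hi j hj
    · exact (hcross j hj i hi).symm
    · exact hd₂ i hi j hj hij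
  · exact union_biUnion
  · have h := sum_union_inter (s₁ := M₁) (s₂ := M₂) (f := S.cost)
    have h0 : 0 ≤ ∑ i ∈ M₁ ∩ M₂, S.cost i :=
      sum_nonneg fun i hi => S.cost_nonneg i (hM₁ (mem_inter.1 hi).1)
    linarith

lemma hasPartition_card (U : Finset E) : S.HasPartition U #U := by
  have hinj : Set.InjOn S.single U := fun u _ v _ h => by
    have := congrArg S.supp h
    simpa [S.supp_single] using this
  refine ⟨U.image S.single, fun i hi => ?_, ?_, ?_, ?_⟩
  · obtain ⟨v, -, rfl⟩ := mem_image.1 hi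
    exact S.single_mem v
  · intro i hi j hj hij
    obtain ⟨u, -, rfl⟩ := mem_image.1 hi
    obtain ⟨v, -, rfl⟩ := mem_image.1 hj
    rw [S.supp_single, S.supp_single, disjoint_singleton]
    rintro rfl; exact hij rfl
  · ext v; simp [S.supp_single]
  · rw [sum_image hinj]
    simpa using sum_le_card_nsmul U _ 1 fun v _ => S.cost_single v

lemma HasPartition.mono {κ κ' : ℝ} (h : S.HasPartition U κ) (hκ : κ ≤ κ') :
    S.HasPartition U κ' := by
  obtain ⟨M, h1, h2, h3, h4⟩ := h
  exact ⟨M, h1, h2, h3, h4.trans hκ⟩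

/-- `1` if no member of `R` meets `W`, else `0`. -/
noncomputable def free (S : PackingSystem E ι r) (R : Finset ι) (W : Finset E) : ℝ :=
  if ∀ i ∈ R, Disjoint (S.supp i) W then 1 else 0

lemma free_nonneg (R : Finset ι) (W : Finset E) : 0 ≤ S.free R W := by
  unfold free; split_ifs <;> norm_num

lemma free_le_one (R : Finset ι) (W : Finset E) : S.free R W ≤ 1 := by
  unfold free; split_ifs <;> norm_num

lemma free_mul_free (R : Finset ι) (W W' : Finset E) :
    S.free R W * S.free R W' = S.free R (W ∪ W') := by
  simp only [free, disjoint_union_right, forall_and, ite_and]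
  split_ifs <;> simp

/-- Total weight of the members meeting `W`. -/
noncomputable def meet (S : PackingSystem E ι r) (f : ι → ℝ) (W : Finset E) : ℝ :=
  ∑ i ∈ S.index, if Disjoint (S.supp i) W then 0 else f i

lemma subsetExp_free (p : ℝ) (W : Finset E) :
    subsetExp S.index (fun i => 1 - Real.exp (-p * f i)) (fun R => S.free R W)
      = Real.exp (-p * S.meet f W) := by
  have h := subsetExp_indicator (q := fun i => 1 - Real.exp (-p * f i)) (empty_subset S.index)
    (filter_subset (fun i => ¬ Disjoint (S.supp i) W) S.index) (disjoint_empty_left _)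
  simp only [empty_subset, true_and, prod_empty, one_mul, sub_sub_cancel] at h
  rw [← Real.exp_sum, ← mul_sum, sum_filter] at h
  simp only [ite_not] at h
  rw [meet, ← h]
  refine sum_congr rfl fun R hR => ?_
  congr 1
  refine if_congr ?_ rfl rfl
  rw [disjoint_right]
  refine forall₂_congr fun i hi => ?_
  simp [mem_powerset.1 hR hi]

lemma IsFracPartition.sum_card_inter (hf : S.IsFracPartition U δ f) {W : Finset E} (hW : W ⊆ U) :
    ∑ i ∈ S.index, f i * #(S.supp i ∩ W) = #W := by
  have h1 : ∑ v ∈ W, S.deg f v = #W := by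
    rw [sum_congr rfl fun v hv => hf.deg_eq v (hW hv)]; simp
  rw [← h1]
  simp only [deg]
  rw [sum_comm]
  refine sum_congr rfl fun i _ => ?_
  rw [← sum_filter, sum_const, nsmul_eq_mul, mul_comm, inter_comm, filter_mem_eq_inter]

lemma IsFracPartition.meet_le (hf : S.IsFracPartition U δ f) {W : Finset E} (hW : W ⊆ U) :
    S.meet f W ≤ #W := by
  rw [← hf.sum_card_inter hW]
  refine sum_le_sum fun i _ => ?_
  split_ifs with h
  · exact mul_nonneg (hf.nonneg i) (Nat.cast_nonneg _)
  · refine le_mul_of_one_le_right (hf.nonneg i) ?_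
    rw [disjoint_iff_inter_eq_empty] at h
    exact_mod_cast card_pos.2 (nonempty_iff_ne_empty.2 h)

lemma IsFracPartition.le_meet (hf : S.IsFracPartition U δ f) (hδ : 0 ≤ δ) {W : Finset E}
    (hW : W ⊆ U) : (#W : ℝ) - (#W : ℝ) ^ 2 * δ ≤ S.meet f W := by
  have h1 : ∑ z ∈ W.offDiag, S.codeg f z.1 z.2 ≤ (#W : ℝ) ^ 2 * δ := by
    refine (sum_le_card_nsmul _ _ δ fun z hz => hf.codeg_le _ _ (mem_offDiag.1 hz).2.2).trans ?_
    rw [nsmul_eq_mul]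
    refine mul_le_mul_of_nonneg_right ?_ hδ
    rw [offDiag_card, sq]
    exact_mod_cast Nat.sub_le _ _
  have h2 : ∑ z ∈ W.offDiag, S.codeg f z.1 z.2
      = ∑ i ∈ S.index, f i * #((S.supp i ∩ W).offDiag) := by
    simp only [codeg]
    rw [sum_comm]
    refine sum_congr rfl fun i _ => ?_
    rw [← sum_filter, sum_const, nsmul_eq_mul, mul_comm]
    congr 3
    ext z
    simp only [mem_filter, mem_offDiag, mem_inter]
    tauto
  have h3 : ∑ i ∈ S.index, f i * #(S.supp i ∩ W)
      ≤ S.meet f W + ∑ i ∈ S.index, f i * #((S.supp i ∩ W).offDiag) := by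
    rw [meet, ← sum_add_distrib]
    refine sum_le_sum fun i _ => ?_
    split_ifs with h
    · rw [disjoint_iff_inter_eq_empty] at h
      simp [h]
    · rw [disjoint_iff_inter_eq_empty] at h
      have hpos := card_pos.2 (nonempty_iff_ne_empty.2 h)
      have : #(S.supp i ∩ W) ≤ 1 + #((S.supp i ∩ W).offDiag) := by
        rw [offDiag_card]
        generalize #(S.supp i ∩ W) = k at hpos ⊢
        obtain ⟨k, rfl⟩ : ∃ l, k = l + 1 := ⟨k - 1, by omega⟩
        have : (k + 1) * (k + 1) - (k + 1) = k * k + k := by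
          rw [Nat.sub_eq_iff_eq_add (by nlinarith)]; ring
        rw [this]; nlinarith
      have : (#(S.supp i ∩ W) : ℝ) ≤ 1 + #((S.supp i ∩ W).offDiag) := by exact_mod_cast this
      nlinarith [hf.nonneg i]
  rw [hf.sum_card_inter hW] at h3
  linarith

/-- Weighting left after removing everything covered by `R`, rescaled to keep degrees near `1`. -/
noncomputable def residual (S : PackingSystem E ι r) (p : ℝ) (f : ι → ℝ) (R : Finset ι) (i : ι) :
    ℝ :=
  f i * Real.exp (p * ((#(S.supp i) : ℝ) - 1)) * S.free R (S.supp i)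

lemma IsWeighting.residual (hf : S.IsWeighting U δ f) {p : ℝ} (hp : 0 ≤ p) (R : Finset ι) :
    S.IsWeighting (U \ R.biUnion S.supp) (Real.exp (p * r) * δ) (S.residual p f R) := by
  have hle : ∀ i ∈ S.index, S.residual p f R i ≤ Real.exp (p * r) * f i := by
    intro i hi
    have h1 : Real.exp (p * ((#(S.supp i) : ℝ) - 1)) ≤ Real.exp (p * r) := by
      refine Real.exp_le_exp.2 (mul_le_mul_of_nonneg_left ?_ hp)
      have : (#(S.supp i) : ℝ) ≤ r := by exact_mod_cast S.card_le i hi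
      linarith
    have h2 := hf.nonneg i
    calc S.residual p f R i ≤ f i * Real.exp (p * ((#(S.supp i) : ℝ) - 1)) :=
          mul_le_of_le_one_right (by positivity) (free_le_one _ _)
      _ ≤ _ := by rw [mul_comm]; exact mul_le_mul_of_nonneg_right h1 h2
  refine ⟨fun i => mul_nonneg (mul_nonneg (hf.nonneg i) (Real.exp_pos _).le) (free_nonneg _ _),
    fun i hi hne => ?_, fun u v huv => ?_⟩
  · have hfi : f i ≠ 0 := fun h => hne (by simp [PackingSystem.residual, h])
    have hfree : ∀ j ∈ R, Disjoint (S.supp j) (S.supp i) := by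
      by_contra h
      exact hne (by simp [PackingSystem.residual, free, h])
    rw [subset_sdiff]
    exact ⟨hf.supp_subset i hi hfi, (disjoint_biUnion_left _ _ _).2 hfree |>.symm⟩
  · refine le_trans ?_ (mul_le_mul_of_nonneg_left (hf.codeg_le u v huv) (Real.exp_pos _).le)
    rw [codeg, codeg, mul_sum]
    refine sum_le_sum fun i hi => ?_
    split_ifs
    exacts [hle i hi, by simp]

end PackingSystem

namespace PackingSystem

variable {E ι : Type} {r : ℕ} {S : PackingSystem E ι r} {U : Finset E} {δ p : ℝ} {f : ι → ℝ}

/-- Keep the members of `R` that meet no other member of `R`, cover the rest of what `R` covers by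
singletons, and partition the remaining points separately. -/
lemma HasPartition.of_sdiff {R : Finset ι} (hR : R ⊆ S.index) (hRU : ∀ i ∈ R, S.supp i ⊆ U)
    {κ : ℝ} (h : S.HasPartition (U \ R.biUnion S.supp) κ) :
    S.HasPartition U (∑ i ∈ S.index, S.cost i * (if i ∈ R then 1 else 0)
      + ∑ i ∈ S.index, ∑ j ∈ S.index, (if i ≠ j ∧ ¬ Disjoint (S.supp i) (S.supp j) then
          (#(S.supp i) : ℝ) * (if i ∈ R ∧ j ∈ R then 1 else 0) else 0) + κ) := by
  set M := R.filter fun i => ∀ j ∈ R, i ≠ j → Disjoint (S.supp i) (S.supp j) with hM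
  have hMR : M ⊆ R := filter_subset _ _
  set T := M.biUnion S.supp with hT
  set T' := R.biUnion S.supp with hT'
  have hTT : T ⊆ T' := biUnion_subset_biUnion_of_subset_left _ hMR
  have hTU : T' ⊆ U := biUnion_subset.2 hRU
  have h1 : S.HasPartition T (∑ i ∈ M, S.cost i) :=
    ⟨M, hMR.trans hR, fun i hi j hj hij => (mem_filter.1 hi).2 j (hMR hj) hij, rfl, le_rfl⟩
  have h2 : S.HasPartition (T' \ T) #(T' \ T) := hasPartition_card _
  have h3 := (h1.union disjoint_sdiff h2).union (by
    rw [union_sdiff_of_subset hTT]; exact disjoint_sdiff) h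
  rw [union_sdiff_of_subset hTT, union_sdiff_of_subset hTU] at h3
  refine h3.mono (add_le_add_left (add_le_add ?_ ?_) _)
  · simp only [mul_ite, mul_one, mul_zero, sum_ite_mem]
    refine sum_le_sum_of_subset_of_nonneg (subset_inter (hMR.trans hR) hMR) fun i hi _ => ?_
    exact S.cost_nonneg i (mem_inter.1 hi).1
  · have hsub : T' \ T ⊆ (R \ M).biUnion S.supp := by
      intro v hv
      obtain ⟨hv1, hv2⟩ := mem_sdiff.1 hv
      obtain ⟨i, hi, hvi⟩ := mem_biUnion.1 hv1
      exact mem_biUnion.2 ⟨i, mem_sdiff.2 ⟨hi, fun hiM => hv2 (mem_biUnion.2 ⟨i, hiM, hvi⟩)⟩, hvi⟩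
    have hcard : (#(T' \ T) : ℝ) ≤ ∑ i ∈ R \ M, (#(S.supp i) : ℝ) := by
      exact_mod_cast (card_le_card hsub).trans card_biUnion_le
    have hterm : ∀ i j, (0 : ℝ) ≤ (if i ≠ j ∧ ¬ Disjoint (S.supp i) (S.supp j) then
          (#(S.supp i) : ℝ) * (if i ∈ R ∧ j ∈ R then 1 else 0) else 0) := fun i j => by
      split_ifs <;> simp
    refine hcard.trans ((sum_le_sum fun i hi => ?_).trans
      (sum_le_sum_of_subset_of_nonneg (sdiff_subset.trans hR) fun i _ _ =>
        sum_nonneg fun j _ => hterm i j))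
    obtain ⟨hiR, hiM⟩ := mem_sdiff.1 hi
    have : ∃ j ∈ R, i ≠ j ∧ ¬ Disjoint (S.supp i) (S.supp j) := by
      by_contra! hc
      exact hiM (mem_filter.2 ⟨hiR, hc⟩)
    obtain ⟨j, hjR, hij⟩ := this
    refine le_trans ?_ (single_le_sum (fun j _ => hterm i j) (hR hjR))
    simp [hij, hiR, hjR]

lemma IsFracPartition.subsetExp_free_le (hf : S.IsFracPartition U δ f) (hδ : 0 ≤ δ) (hp : 0 ≤ p)
    {W : Finset E} (hW : W ⊆ U) :
    subsetExp S.index (fun i => 1 - Real.exp (-p * f i)) (fun R => S.free R W)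
      ≤ Real.exp (-p * (#W : ℝ) + p * ((#W : ℝ) ^ 2 * δ)) := by
  rw [subsetExp_free]
  refine Real.exp_le_exp.2 ?_
  nlinarith [hf.le_meet hδ hW]

lemma IsFracPartition.le_subsetExp_free (hf : S.IsFracPartition U δ f) (hp : 0 ≤ p)
    {W : Finset E} (hW : W ⊆ U) :
    Real.exp (-p * (#W : ℝ))
      ≤ subsetExp S.index (fun i => 1 - Real.exp (-p * f i)) (fun R => S.free R W) := by
  rw [subsetExp_free]
  refine Real.exp_le_exp.2 ?_
  nlinarith [hf.meet_le hW]

lemma IsFracPartition.subsetExp_free_singleton (hf : S.IsFracPartition U δ f) {v : E}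
    (hv : v ∈ U) :
    subsetExp S.index (fun i => 1 - Real.exp (-p * f i)) (fun R => S.free R {v})
      = Real.exp (-p) := by
  rw [subsetExp_free]
  have : S.meet f {v} = 1 := by
    rw [← hf.deg_eq v hv, meet, deg]
    exact sum_congr rfl fun i _ => by simp [ite_not]
  rw [this, mul_one]

lemma IsFracPartition.subsetExp_total_residual_le (hf : S.IsFracPartition U δ f) (hδ : 0 ≤ δ)
    (hp : 0 ≤ p) :
    subsetExp S.index (fun i => 1 - Real.exp (-p * f i)) (fun R => S.total (S.residual p f R))
      ≤ Real.exp (-p + p * ((r : ℝ) ^ 2 * δ)) * S.total f := by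
  simp only [total]
  rw [subsetExp_sum, mul_sum]
  refine sum_le_sum fun i hi => ?_
  simp only [residual]
  rw [subsetExp_const_mul, subsetExp_const_mul]
  by_cases hfi : f i = 0
  · simp [hfi]
  have h1 := hf.subsetExp_free_le hδ hp (hf.supp_subset i hi hfi)
  have hc : (#(S.supp i) : ℝ) ≤ r := by exact_mod_cast S.card_le i hi
  have h2 : Real.exp (p * ((#(S.supp i) : ℝ) - 1))
      * subsetExp S.index (fun i => 1 - Real.exp (-p * f i)) (fun R => S.free R (S.supp i))
      ≤ Real.exp (-p + p * ((r : ℝ) ^ 2 * δ)) := by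
    refine (mul_le_mul_of_nonneg_left h1 (Real.exp_pos _).le).trans ?_
    rw [← Real.exp_add]
    refine Real.exp_le_exp.2 ?_
    have : p * ((#(S.supp i) : ℝ) ^ 2 * δ) ≤ p * ((r : ℝ) ^ 2 * δ) := by gcongr
    linarith
  have h3 := mul_le_mul_of_nonneg_left h2 (mul_nonneg (S.cost_nonneg i hi) (hf.nonneg i))
  linarith

lemma IsFracPartition.le_subsetExp_deg_residual (hf : S.IsFracPartition U δ f) (hp : 0 ≤ p)
    {v : E} (hv : v ∈ U) :
    Real.exp (-p) ≤
    subsetExp S.index (fun i => 1 - Real.exp (-p * f i)) (fun R => S.deg (S.residual p f R) v) := by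
  have h0 : Real.exp (-p) = ∑ i ∈ S.index, if v ∈ S.supp i then Real.exp (-p) * f i else 0 := by
    have h1 : Real.exp (-p) = Real.exp (-p) * S.deg f v := by rw [hf.deg_eq v hv, mul_one]
    refine h1.trans ?_
    rw [deg, mul_sum]
    exact sum_congr rfl fun i _ => by rw [mul_ite, mul_zero]
  rw [h0]
  simp only [deg]
  rw [subsetExp_sum]
  refine sum_le_sum fun i hi => ?_
  split_ifs with hvi
  · simp only [residual]
    rw [subsetExp_const_mul]
    by_cases hfi : f i = 0
    · simp [hfi]
    have h1 := hf.le_subsetExp_free hp (hf.supp_subset i hi hfi)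
    have h2 : Real.exp (-p) ≤ Real.exp (p * ((#(S.supp i) : ℝ) - 1))
        * subsetExp S.index (fun i => 1 - Real.exp (-p * f i)) (fun R => S.free R (S.supp i)) := by
      refine le_trans ?_ (mul_le_mul_of_nonneg_left h1 (Real.exp_pos _).le)
      rw [← Real.exp_add]
      exact Real.exp_le_exp.2 (by linarith)
    have h3 := mul_le_mul_of_nonneg_left h2 (hf.nonneg i)
    linarith
  · rw [subsetExp_const]

lemma IsFracPartition.subsetExp_deg_residual_sq_le (hf : S.IsFracPartition U δ f) (hδ : 0 ≤ δ)
    (hp : 0 ≤ p) {v : E} (hv : v ∈ U) :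
    subsetExp S.index (fun i => 1 - Real.exp (-p * f i))
        (fun R => S.deg (S.residual p f R) v ^ 2)
      ≤ Real.exp (4 * p * (r : ℝ) ^ 2 * δ)
        * (Real.exp (-p) + Real.exp (p * r) * (r * δ)) := by
  set L := Real.exp (4 * p * (r : ℝ) ^ 2 * δ) with hL
  set A := Real.exp (p * (r : ℝ)) with hA
  have hA0 : 0 < A := Real.exp_pos _
  have hL0 : 0 < L := Real.exp_pos _
  have hsq : ∀ R, S.deg (S.residual p f R) v ^ 2 = ∑ i ∈ S.index, ∑ j ∈ S.index,
      (if v ∈ S.supp i ∧ v ∈ S.supp j then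
        (f i * f j * Real.exp (p * ((#(S.supp i) : ℝ) + #(S.supp j) - 2)))
        else 0) * S.free R (S.supp i ∪ S.supp j) := by
    intro R
    rw [sq, deg, sum_mul_sum]
    refine sum_congr rfl fun i _ => sum_congr rfl fun j _ => ?_
    rw [← free_mul_free]
    by_cases hi : v ∈ S.supp i <;> by_cases hj : v ∈ S.supp j <;> simp only [hi, hj, if_true,
      if_false, and_self, and_true, and_false, zero_mul, mul_zero, residual]
    have : Real.exp (p * ((#(S.supp i) : ℝ) + #(S.supp j) - 2))
        = Real.exp (p * ((#(S.supp i) : ℝ) - 1)) * Real.exp (p * ((#(S.supp j) : ℝ) - 1)) := by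
      rw [← Real.exp_add]; congr 1; ring
    rw [this]; ring
  have hcodeg : ∀ i, ∑ j ∈ S.index, (if v ∈ S.supp j then
      f j * (Real.exp (-p) + A * ∑ u ∈ (S.supp i).erase v, if u ∈ S.supp j then 1 else 0) else 0)
      = Real.exp (-p) + A * ∑ u ∈ (S.supp i).erase v, S.codeg f u v := by
    intro i
    have : ∀ j, (if v ∈ S.supp j then
      f j * (Real.exp (-p) + A * ∑ u ∈ (S.supp i).erase v, if u ∈ S.supp j then 1 else 0) else 0)
      = Real.exp (-p) * (if v ∈ S.supp j then f j else 0)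
        + A * ∑ u ∈ (S.supp i).erase v,
          if u ∈ S.supp j ∧ v ∈ S.supp j then f j else 0 := by
      intro j
      by_cases hj : v ∈ S.supp j
      · simp only [hj, if_true, and_true, mul_add, mul_sum]
        congr 1
        · ring
        · exact sum_congr rfl fun u _ => by split_ifs <;> ring
      · simp [hj]
    simp only [this, sum_add_distrib, ← mul_sum]
    have h1 := hf.deg_eq v hv
    rw [deg] at h1
    rw [h1, mul_one, sum_comm]
    rfl
  have hpair : ∀ i ∈ S.index, ∀ j ∈ S.index,
      subsetExp S.index (fun i => 1 - Real.exp (-p * f i)) (fun R =>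
      (if v ∈ S.supp i ∧ v ∈ S.supp j then
        (f i * f j * Real.exp (p * ((#(S.supp i) : ℝ) + #(S.supp j) - 2)))
        else 0) * S.free R (S.supp i ∪ S.supp j))
      ≤ L * ((if v ∈ S.supp i then f i else 0) * if v ∈ S.supp j then
      f j * (Real.exp (-p) + A * ∑ u ∈ (S.supp i).erase v, if u ∈ S.supp j then 1 else 0)
        else 0) := by
    intro i hi j hj
    rw [subsetExp_const_mul]
    by_cases hvi : v ∈ S.supp i
    swap
    · simp [hvi]
    by_cases hvj : v ∈ S.supp j
    swap
    · simp [hvj]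
    simp only [hvi, hvj, and_self, if_true]
    by_cases hfi : f i = 0
    · simp [hfi]
    by_cases hfj : f j = 0
    · simp [hfj]
    have h1 := hf.subsetExp_free_le hδ hp
      (union_subset (hf.supp_subset i hi hfi) (hf.supp_subset j hj hfj))
    have hci : (#(S.supp i) : ℝ) ≤ r := by exact_mod_cast S.card_le i hi
    have hcj : (#(S.supp j) : ℝ) ≤ r := by exact_mod_cast S.card_le j hj
    have hui : (#(S.supp i ∪ S.supp j) : ℝ) + #(S.supp i ∩ S.supp j)
        = #(S.supp i) + #(S.supp j) := by exact_mod_cast card_union_add_card_inter _ _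
    have hin : (0 : ℝ) ≤ #(S.supp i ∩ S.supp j) := Nat.cast_nonneg _
    have hun : (0 : ℝ) ≤ #(S.supp i ∪ S.supp j) := Nat.cast_nonneg _
    have h2 : Real.exp (p * ((#(S.supp i) : ℝ) + #(S.supp j) - 2))
        * subsetExp S.index (fun i => 1 - Real.exp (-p * f i))
            (fun R => S.free R (S.supp i ∪ S.supp j))
        ≤ L * Real.exp (p * ((#(S.supp i ∩ S.supp j) : ℝ) - 2)) := by
      refine (mul_le_mul_of_nonneg_left h1 (Real.exp_pos _).le).trans ?_
      rw [hL, ← Real.exp_add, ← Real.exp_add]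
      refine Real.exp_le_exp.2 ?_
      have hsq : (#(S.supp i ∪ S.supp j) : ℝ) ^ 2 ≤ 4 * (r : ℝ) ^ 2 := by nlinarith
      have := mul_le_mul_of_nonneg_left (mul_le_mul_of_nonneg_right hsq hδ) hp
      nlinarith
    have h3 : Real.exp (p * ((#(S.supp i ∩ S.supp j) : ℝ) - 2))
        ≤ Real.exp (-p) + A * ∑ u ∈ (S.supp i).erase v, if u ∈ S.supp j then 1 else 0 := by
      have hnn : ∀ u, (0 : ℝ) ≤ if u ∈ S.supp j then 1 else 0 := fun u => by
        split_ifs <;> norm_num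
      by_cases hex : ∃ u ∈ (S.supp i).erase v, u ∈ S.supp j
      · obtain ⟨u, hu, huj⟩ := hex
        have hone : (1 : ℝ) ≤ ∑ u ∈ (S.supp i).erase v, if u ∈ S.supp j then 1 else 0 := by
          refine le_trans ?_ (single_le_sum (fun u _ => hnn u) hu)
          simp [huj]
        have hle : Real.exp (p * ((#(S.supp i ∩ S.supp j) : ℝ) - 2)) ≤ A := by
          refine Real.exp_le_exp.2 (mul_le_mul_of_nonneg_left ?_ hp)
          have : (#(S.supp i ∩ S.supp j) : ℝ) ≤ #(S.supp i) := by
            exact_mod_cast card_le_card inter_subset_left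
          linarith
        nlinarith [Real.exp_pos (-p)]
      · push Not at hex
        have hcard : S.supp i ∩ S.supp j = {v} := by
          ext u
          rw [mem_inter, mem_singleton]
          constructor
          · rintro ⟨hu1, hu2⟩
            by_contra huv
            exact hex u (mem_erase.2 ⟨huv, hu1⟩) hu2
          · rintro rfl; exact ⟨hvi, hvj⟩
        rw [hcard, card_singleton]
        have : p * (((1 : ℕ) : ℝ) - 2) = -p := by push_cast; ring
        rw [this]
        have := sum_nonneg fun u (_ : u ∈ (S.supp i).erase v) => hnn u
        nlinarith [mul_nonneg hA0.le this]
    have h4 := h2.trans (mul_le_mul_of_nonneg_left h3 hL0.le)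
    have h5 := mul_le_mul_of_nonneg_left h4 (mul_nonneg (hf.nonneg i) (hf.nonneg j))
    linarith
  simp only [hsq]
  rw [subsetExp_sum]
  have hrow : ∀ i ∈ S.index, subsetExp S.index (fun i => 1 - Real.exp (-p * f i)) (fun R =>
      ∑ j ∈ S.index, (if v ∈ S.supp i ∧ v ∈ S.supp j then
        (f i * f j * Real.exp (p * ((#(S.supp i) : ℝ) + #(S.supp j) - 2)))
        else 0) * S.free R (S.supp i ∪ S.supp j))
      ≤ L * (Real.exp (-p) + A * (r * δ)) * if v ∈ S.supp i then f i else 0 := by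
    intro i hi
    rw [subsetExp_sum]
    refine (sum_le_sum (hpair i hi)).trans ?_
    rw [← mul_sum, ← mul_sum, hcodeg]
    have hsum : ∑ u ∈ (S.supp i).erase v, S.codeg f u v ≤ r * δ := by
      refine (sum_le_card_nsmul _ _ δ fun u hu => hf.codeg_le u v (ne_of_mem_erase hu)).trans ?_
      rw [nsmul_eq_mul]
      refine mul_le_mul_of_nonneg_right ?_ hδ
      exact_mod_cast (card_le_card (erase_subset _ _)).trans (S.card_le i hi)
    have hfi : 0 ≤ if v ∈ S.supp i then f i else 0 := by
      split_ifs
      exacts [hf.nonneg i, le_rfl]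
    have := mul_le_mul_of_nonneg_left (mul_le_mul_of_nonneg_left hsum hA0.le)
      (mul_nonneg hL0.le hfi)
    nlinarith
  refine (sum_le_sum hrow).trans ?_
  rw [← mul_sum]
  have h1 := hf.deg_eq v hv
  rw [deg] at h1
  rw [h1, mul_one]

end PackingSystem

namespace PackingSystem

variable {E ι : Type} {r : ℕ} {S : PackingSystem E ι r} {U : Finset E} {δ p : ℝ} {f : ι → ℝ}

lemma IsFracPartition.subsetExp_conflicts_le (hf : S.IsFracPartition U δ f) (hp : 0 ≤ p) :
    subsetExp S.index (fun i => 1 - Real.exp (-p * f i)) (fun R =>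
      ∑ i ∈ S.index, ∑ j ∈ S.index, (if i ≠ j ∧ ¬ Disjoint (S.supp i) (S.supp j) then
          (#(S.supp i) : ℝ) * (if i ∈ R ∧ j ∈ R then 1 else 0) else 0)) ≤ p ^ 2 * r * #U := by
  have hq : ∀ i, 1 - Real.exp (-p * f i) ≤ p * f i := fun i => by
    have := Real.add_one_le_exp (-p * f i); linarith
  have hq0 : ∀ i, 0 ≤ 1 - Real.exp (-p * f i) := fun i => by
    have := Real.exp_le_one_iff.2 (show -p * f i ≤ 0 by nlinarith [hf.nonneg i, hp])
    linarith
  have hrow : ∀ i ∈ S.index, subsetExp S.index (fun i => 1 - Real.exp (-p * f i)) (fun R =>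
      ∑ j ∈ S.index, (if i ≠ j ∧ ¬ Disjoint (S.supp i) (S.supp j) then
          (#(S.supp i) : ℝ) * (if i ∈ R ∧ j ∈ R then 1 else 0) else 0))
      ≤ p ^ 2 * r * (f i * #(S.supp i)) := by
    intro i hi
    by_cases hfi : f i = 0
    · rw [subsetExp_sum, hfi]
      simp only [zero_mul, mul_zero]
      refine sum_nonpos fun j hj => ?_
      by_cases hij : i ≠ j ∧ ¬ Disjoint (S.supp i) (S.supp j)
      · simp only [if_pos hij]
        have h := subsetExp_indicator (q := fun i => 1 - Real.exp (-p * f i))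
          (insert_subset hi (singleton_subset_iff.2 hj)) (empty_subset S.index)
          (disjoint_empty_right _)
        simp only [insert_subset_iff, singleton_subset_iff, disjoint_empty_left, and_true,
          prod_empty, mul_one] at h
        rw [subsetExp_const_mul, h, prod_pair hij.1]
        simp [hfi]
      · simp only [if_neg hij]
        rw [subsetExp_const]
    have hterm : ∀ j ∈ S.index, subsetExp S.index (fun i => 1 - Real.exp (-p * f i)) (fun R =>
        (if i ≠ j ∧ ¬ Disjoint (S.supp i) (S.supp j) then
          (#(S.supp i) : ℝ) * (if i ∈ R ∧ j ∈ R then 1 else 0) else 0))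
        ≤ p ^ 2 * (f i * #(S.supp i)) * if Disjoint (S.supp j) (S.supp i) then 0 else f j := by
      intro j hj
      by_cases hij : i ≠ j ∧ ¬ Disjoint (S.supp i) (S.supp j)
      · simp only [if_pos hij]
        have h := subsetExp_indicator (q := fun i => 1 - Real.exp (-p * f i))
          (insert_subset hi (singleton_subset_iff.2 hj)) (empty_subset S.index)
          (disjoint_empty_right _)
        simp only [insert_subset_iff, singleton_subset_iff, disjoint_empty_left, and_true,
          prod_empty, mul_one] at h
        rw [subsetExp_const_mul, h, prod_pair hij.1, if_neg fun hd => hij.2 hd.symm]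
        have h1 := mul_le_mul (hq i) (hq j) (hq0 j) (mul_nonneg hp (hf.nonneg i))
        have h2 := mul_le_mul_of_nonneg_left h1 (Nat.cast_nonneg (α := ℝ) #(S.supp i))
        linarith
      · simp only [if_neg hij]
        rw [subsetExp_const]
        refine mul_nonneg (mul_nonneg (sq_nonneg p) (mul_nonneg (hf.nonneg i)
          (Nat.cast_nonneg _))) ?_
        split_ifs
        exacts [le_rfl, hf.nonneg j]
    rw [subsetExp_sum]
    refine (sum_le_sum hterm).trans ?_
    rw [← mul_sum]
    have hm := hf.meet_le (hf.supp_subset i hi hfi)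
    have hc : (#(S.supp i) : ℝ) ≤ r := by exact_mod_cast S.card_le i hi
    have h0 : 0 ≤ p ^ 2 * (f i * #(S.supp i)) :=
      mul_nonneg (sq_nonneg p) (mul_nonneg (hf.nonneg i) (Nat.cast_nonneg _))
    refine (mul_le_mul_of_nonneg_left (hm.trans hc) h0).trans (le_of_eq ?_)
    ring
  rw [subsetExp_sum]
  refine (sum_le_sum hrow).trans ?_
  rw [← mul_sum, hf.sum_card_mul]

lemma deg_residual_eq_zero {R : Finset ι} {v : E} (hv : S.free R {v} = 0) :
    S.deg (S.residual p f R) v = 0 := by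
  refine sum_eq_zero fun i _ => ?_
  split_ifs with hvi
  · have : S.free R (S.supp i) = 0 := by
      rw [← insert_eq_of_mem hvi, insert_eq, ← free_mul_free, hv, zero_mul]
    simp [residual, this]
  · rfl

/-- One step of the semi-random method. -/
lemma IsFracPartition.hasPartition_step (hr : 1 ≤ r) (hp : 0 < p) (hp1 : p ≤ 1) (hδ : 0 ≤ δ)
    (hsmall : Real.exp (4 * p * (r : ℝ) ^ 2 * δ)
        * (Real.exp (-p) + Real.exp (p * r) * (r * δ)) ≤ Real.exp (-p) + p ^ 4)
    {η : ℝ}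
    (ih : ∀ (U' : Finset E) (g : ι → ℝ), S.IsFracPartition U' (Real.exp (p * r) * δ) g →
      S.HasPartition U' (S.total g + η * #U'))
    (hf : S.IsFracPartition U δ f) :
    S.HasPartition U (S.total f + (Real.exp (-p) * η + (3 * r + 2) * p ^ 2) * #U) := by
  set q : ι → ℝ := fun i => 1 - Real.exp (-p * f i) with hq
  have hq0 : ∀ i, 0 ≤ q i := fun i => by
    have := Real.exp_le_one_iff.2 (show -p * f i ≤ 0 by nlinarith [hf.nonneg i, hp.le])
    simp only [hq]; linarith
  have hq1 : ∀ i, q i ≤ 1 := fun i => by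
    have := Real.exp_pos (-p * f i)
    simp only [hq]; linarith
  set Z₁ : Finset ι → ℝ := fun R => ∑ i ∈ S.index, S.cost i * (if i ∈ R then 1 else 0) with hZ₁
  set Z₂ : Finset ι → ℝ := fun R => ∑ i ∈ S.index, ∑ j ∈ S.index,
    (if i ≠ j ∧ ¬ Disjoint (S.supp i) (S.supp j) then
      (#(S.supp i) : ℝ) * (if i ∈ R ∧ j ∈ R then 1 else 0) else 0) with hZ₂
  set X : Finset ι → E → ℝ := fun R v => S.deg (S.residual p f R) v with hX
  set Z₃ : Finset ι → ℝ := fun R => ∑ v ∈ U,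
    (p ^ 2 + (p ^ 2)⁻¹ * (X R v ^ 2 + ((-2) * X R v + S.free R {v}))) with hZ₃
  set Z₄ : Finset ι → ℝ := fun R => ∑ v ∈ U, S.free R {v} with hZ₄
  have hp2 : 0 < p ^ 2 := by positivity
  have e1 : subsetExp S.index q Z₁ ≤ p * S.total f := by
    rw [hZ₁, subsetExp_sum, total, mul_sum]
    refine sum_le_sum fun i hi => ?_
    have h := subsetExp_indicator (q := q) (singleton_subset_iff.2 hi) (empty_subset S.index)
      (disjoint_empty_right _)
    simp only [singleton_subset_iff, disjoint_empty_left, and_true, prod_empty, mul_one,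
      prod_singleton] at h
    rw [subsetExp_const_mul, h]
    have : q i ≤ p * f i := by
      have := Real.add_one_le_exp (-p * f i); simp only [hq]; linarith
    have := mul_le_mul_of_nonneg_left this (S.cost_nonneg i hi)
    linarith
  have e2 : subsetExp S.index q Z₂ ≤ p ^ 2 * r * #U := hf.subsetExp_conflicts_le hp.le
  have e4 : subsetExp S.index q Z₄ = Real.exp (-p) * #U := by
    rw [hZ₄, subsetExp_sum, sum_congr rfl fun v hv => hf.subsetExp_free_singleton hv]
    simp [mul_comm]
  have e3 : subsetExp S.index q Z₃ ≤ 2 * p ^ 2 * #U := by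
    rw [hZ₃, subsetExp_sum, mul_comm, ← nsmul_eq_mul]
    refine sum_le_card_nsmul _ _ _ fun v hv => ?_
    rw [subsetExp_add, subsetExp_const, subsetExp_const_mul, subsetExp_add, subsetExp_add,
      subsetExp_const_mul, hf.subsetExp_free_singleton hv]
    have h1 := hf.subsetExp_deg_residual_sq_le hδ hp.le hv
    have h2 := hf.le_subsetExp_deg_residual hp.le hv
    have h3 : (p ^ 2)⁻¹ * (subsetExp S.index q (fun R => X R v ^ 2)
        + ((-2) * subsetExp S.index q (fun R => X R v) + Real.exp (-p))) ≤ (p ^ 2)⁻¹ * p ^ 4 := by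
      refine mul_le_mul_of_nonneg_left ?_ (inv_nonneg.2 hp2.le)
      simp only [hX, hq]
      linarith
    have h4 : (p ^ 2)⁻¹ * p ^ 4 = p ^ 2 := by field_simp
    linarith
  have e5 := hf.subsetExp_total_residual_le hδ hp.le
  have hmain : subsetExp S.index q (fun R => (Z₁ R + Z₂ R)
      + (S.total (S.residual p f R) + (r * Z₃ R + η * Z₄ R)))
      ≤ S.total f + (Real.exp (-p) * η + (3 * r + 2) * p ^ 2) * #U := by
    rw [subsetExp_add, subsetExp_add, subsetExp_add, subsetExp_add, subsetExp_const_mul,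
      subsetExp_const_mul, e4]
    have hU := hf.total_le
    have ht0 := hf.total_nonneg
    have hU0 : (0 : ℝ) ≤ #U := Nat.cast_nonneg _
    have hexp : Real.exp (-p) ≤ 1 - p + p ^ 2 := by
      have := Real.abs_exp_sub_one_sub_id_le (x := -p) (by rw [abs_neg, abs_of_pos hp]; exact hp1)
      have := (abs_le.1 this).2
      nlinarith
    have hexp2 : Real.exp (-p + p * ((r : ℝ) ^ 2 * δ)) ≤ Real.exp (-p) + p ^ 4 := by
      refine le_trans ?_ hsmall
      have h1 : Real.exp (p * ((r : ℝ) ^ 2 * δ)) ≤ Real.exp (4 * p * (r : ℝ) ^ 2 * δ) := by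
        refine Real.exp_le_exp.2 ?_
        have : 0 ≤ p * ((r : ℝ) ^ 2 * δ) := by positivity
        linarith
      rw [Real.exp_add, mul_comm]
      refine mul_le_mul h1 ?_ (Real.exp_pos _).le (Real.exp_pos _).le
      have : 0 ≤ Real.exp (p * r) * (r * δ) := by positivity
      linarith
    have hp4 : p ^ 4 ≤ p ^ 2 := pow_le_pow_of_le_one hp.le hp1 (by norm_num)
    have h5 := e5.trans (mul_le_mul_of_nonneg_right hexp2 ht0)
    have h3 := mul_le_mul_of_nonneg_left e3 (Nat.cast_nonneg (α := ℝ) r)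
    have h6 : (p + (Real.exp (-p) + p ^ 4)) * S.total f ≤ (1 + 2 * p ^ 2) * S.total f :=
      mul_le_mul_of_nonneg_right (by linarith) ht0
    have h7 : 2 * p ^ 2 * S.total f ≤ 2 * p ^ 2 * #U :=
      mul_le_mul_of_nonneg_left hU (by positivity)
    linarith
  obtain ⟨R, hR, hRq, hZ⟩ := exists_le_of_subsetExp_le hq0 hq1 hmain
  have hRU : ∀ i ∈ R, S.supp i ⊆ U := fun i hi =>
    hf.supp_subset i (hR hi) fun h0 => hRq i hi (by simp [hq, h0])
  obtain ⟨g, hg, hgt⟩ := (hf.residual hp.le R).exists_isFracPartition hr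
  refine (HasPartition.of_sdiff hR hRU (ih _ g hg)).mono (le_trans ?_ hZ)
  refine add_le_add_right ?_ _
  have hfree : ∀ v ∈ U, S.free R {v} = if v ∈ U \ R.biUnion S.supp then 1 else 0 := by
    intro v hv
    refine if_congr ?_ rfl rfl
    simp [hv]
  have hU' : Z₄ R = #(U \ R.biUnion S.supp) := by
    rw [hZ₄]
    simp only
    rw [sum_congr rfl hfree, sum_ite_mem, inter_eq_right.2 sdiff_subset]
    simp
  have hdev : ∑ v ∈ U \ R.biUnion S.supp, |S.deg (S.residual p f R) v - 1| ≤ Z₃ R := by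
    have h0 : ∑ v ∈ U \ R.biUnion S.supp, |X R v - 1| = ∑ v ∈ U,
        if v ∈ U \ R.biUnion S.supp then |X R v - 1| else 0 := by
      rw [sum_ite_mem, inter_eq_right.2 sdiff_subset]
    refine h0.le.trans (sum_le_sum fun v hv => ?_)
    split_ifs with hvU
    · rw [hfree v hv, if_pos hvU]
      have h1 : X R v ^ 2 + (-2 * X R v + 1) = |X R v - 1| ^ 2 := by rw [sq_abs]; ring
      rw [h1]
      have h2 : 0 ≤ (p ^ 2)⁻¹ * ((p ^ 2 - |X R v - 1|) ^ 2 + p ^ 2 * |X R v - 1|) := by positivity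
      have h3 : (p ^ 2)⁻¹ * ((p ^ 2 - |X R v - 1|) ^ 2 + p ^ 2 * |X R v - 1|)
          = p ^ 2 + (p ^ 2)⁻¹ * |X R v - 1| ^ 2 - |X R v - 1| := by field_simp; ring
      linarith
    · have h1 := hfree v hv
      rw [if_neg hvU] at h1
      have h2 : X R v = 0 := deg_residual_eq_zero h1
      rw [h1, h2]
      have := hp2.le
      simpa using this
  have := mul_le_mul_of_nonneg_left hdev (Nat.cast_nonneg (α := ℝ) r)
  rw [hU']
  linarith

end PackingSystem

/-- Every fractional partition with codegrees at most `δ` can be rounded to a partition at an extra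
cost of at most `η` per point. -/
def RoundsWithin (r : ℕ) (η δ : ℝ) : Prop :=
  ∀ (E ι : Type) (S : PackingSystem E ι r) (U : Finset E) (f : ι → ℝ),
    S.IsFracPartition U δ f → S.HasPartition U (S.total f + η * #U)

lemma RoundsWithin.step {r : ℕ} (hr : 1 ≤ r) {η δ p : ℝ} (hδ : 0 < δ)
    (h : RoundsWithin r η δ) (hp : 0 < p) (hp1 : p ≤ 1) :
    ∃ δ' > 0, RoundsWithin r (Real.exp (-p) * η + (3 * r + 2) * p ^ 2) δ' := by
  have hlim : Filter.Tendsto (fun δ' : ℝ => Real.exp (4 * p * (r : ℝ) ^ 2 * δ')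
      * (Real.exp (-p) + Real.exp (p * r) * (r * δ'))) (nhds 0) (nhds (Real.exp (-p))) := by
    have hc : Continuous fun δ' : ℝ => Real.exp (4 * p * (r : ℝ) ^ 2 * δ')
      * (Real.exp (-p) + Real.exp (p * r) * (r * δ')) := by fun_prop
    simpa using hc.tendsto 0
  have hlim2 : Filter.Tendsto (fun δ' : ℝ => Real.exp (p * r) * δ') (nhds 0) (nhds 0) := by
    have hc : Continuous fun δ' : ℝ => Real.exp (p * r) * δ' := by fun_prop
    simpa using hc.tendsto 0
  have hp4 : Real.exp (-p) < Real.exp (-p) + p ^ 4 := by have : 0 < p ^ 4 := by positivity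
                                                         linarith
  have hev := (((hlim.eventually_le_const hp4).and (hlim2.eventually_le_const hδ)).filter_mono
    (nhdsWithin_le_nhds (s := Set.Ioi 0))).and self_mem_nhdsWithin
  obtain ⟨δ', ⟨h1, h2⟩, h3⟩ := hev.exists
  have h3 : 0 < δ' := h3
  refine ⟨δ', h3, fun E ι S U f hf => hf.hasPartition_step hr hp hp1 h3.le h1
    fun U' g hg => h E ι S U' g ⟨⟨hg.nonneg, hg.supp_subset, fun u v huv =>
      (hg.codeg_le u v huv).trans h2⟩, hg.deg_eq⟩⟩

lemma exists_roundsWithin {r : ℕ} (hr : 1 ≤ r) {η : ℝ} (hη : 0 < η) :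
    ∃ δ > 0, RoundsWithin r η δ := by
  set A : Set ℝ := {η | 0 ≤ η ∧ ∃ δ > 0, RoundsWithin r η δ} with hA
  have h1 : (1 : ℝ) ∈ A := by
    refine ⟨zero_le_one, 1, one_pos, fun E ι S U f hf => ?_⟩
    refine (PackingSystem.hasPartition_card U).mono ?_
    have := hf.total_nonneg
    linarith
  have hbdd : BddBelow A := ⟨0, fun x hx => hx.1⟩
  set m := sInf A with hm
  have hm0 : 0 ≤ m := le_csInf ⟨1, h1⟩ fun x hx => hx.1
  have hC : (0 : ℝ) < 3 * r + 2 := by positivity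
  have hstep : ∀ p : ℝ, 0 < p → p ≤ 1 → m * (p / 2) ≤ (3 * r + 2) * p ^ 2 := by
    intro p hp hp1
    have h2 : ∀ x ∈ A, (m - (3 * r + 2) * p ^ 2) * Real.exp p ≤ x := by
      rintro x ⟨hx0, δ, hδ, hx⟩
      have : m ≤ Real.exp (-p) * x + (3 * r + 2) * p ^ 2 :=
        csInf_le hbdd ⟨by positivity, hx.step hr hδ hp hp1⟩
      have h3 : (m - (3 * r + 2) * p ^ 2) * Real.exp p ≤ (Real.exp (-p) * x) * Real.exp p :=
        mul_le_mul_of_nonneg_right (by linarith) (Real.exp_pos _).le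
      have h4 : (Real.exp (-p) * x) * Real.exp p = x := by
        rw [mul_comm (Real.exp (-p)), mul_assoc, ← Real.exp_add]; simp
      linarith
    have h3 : (m - (3 * r + 2) * p ^ 2) * Real.exp p ≤ m := le_csInf ⟨1, h1⟩ h2
    have h4 := Real.add_one_le_exp p
    have h5 : Real.exp p * Real.exp (-p) = 1 := by rw [← Real.exp_add]; simp
    have h6 : Real.exp (-p) ≤ 1 - p / 2 := by
      by_contra hc
      push Not at hc
      nlinarith [Real.exp_pos p, Real.exp_pos (-p)]
    have h7 := mul_le_mul_of_nonneg_right h3 (Real.exp_pos (-p)).le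
    rw [mul_assoc, h5, mul_one] at h7
    nlinarith
  have hm' : m < η := by
    by_contra! hc
    set p := min 1 (η / (4 * (3 * r + 2))) with hp
    have hp0 : 0 < p := lt_min one_pos (by positivity)
    have h2 := hstep p hp0 (min_le_left _ _)
    have h3 : p * (4 * (3 * r + 2)) ≤ η := by
      rw [← le_div_iff₀ (by positivity)]; exact min_le_right _ _
    nlinarith
  obtain ⟨x, ⟨hx0, δ, hδ, hx⟩, hxη⟩ := exists_lt_of_csInf_lt ⟨1, h1⟩ hm'
  refine ⟨δ, hδ, fun E ι S U f hf => (hx E ι S U f hf).mono ?_⟩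
  have : x * (#U : ℝ) ≤ η * #U := mul_le_mul_of_nonneg_right hxη.le (Nat.cast_nonneg _)
  linarith

namespace PackingSystem

variable {E ι : Type} {r : ℕ} {S : PackingSystem E ι r}

lemma deg_eq_zero {U : Finset E} {δ : ℝ} {f : ι → ℝ} (hf : S.IsWeighting U δ f) {v : E}
    (hv : v ∉ U) : S.deg f v = 0 := by
  refine sum_eq_zero fun i hi => ?_
  split_ifs with h
  · by_contra h0
    exact hv (hf.supp_subset i hi h0 h)
  · rfl

/-- The average of a family of fractional partitions that covers each point `D` times and each pair
of points at most `δ * D` times. -/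
lemma isFracPartition_average [Fintype E] {α : Type} (s : Finset α) (U : α → Finset E)
    (f : α → ι → ℝ) (hf : ∀ a ∈ s, S.IsFracPartition (U a) 1 (f a)) {D δ τ : ℝ} (hD : 0 < D)
    (hdeg : ∀ v, (#{a ∈ s | v ∈ U a} : ℝ) = D)
    (hcodeg : ∀ u v, u ≠ v → (#{a ∈ s | u ∈ U a ∧ v ∈ U a} : ℝ) ≤ δ * D)
    (hτ : ∀ a ∈ s, S.total (f a) ≤ τ) :
    S.IsFracPartition univ δ (fun i => (∑ a ∈ s, f a i) / D) ∧
      S.total (fun i => (∑ a ∈ s, f a i) / D) ≤ #s * τ / D := by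
  have hd : ∀ v, S.deg (fun i => (∑ a ∈ s, f a i) / D) v = (∑ a ∈ s, S.deg (f a) v) / D := by
    intro v
    simp only [deg]
    rw [sum_comm, sum_div]
    refine sum_congr rfl fun i _ => ?_
    split_ifs <;> simp
  have hc : ∀ u v, S.codeg (fun i => (∑ a ∈ s, f a i) / D) u v =
      (∑ a ∈ s, S.codeg (f a) u v) / D := by
    intro u v
    simp only [codeg]
    rw [sum_comm, sum_div]
    refine sum_congr rfl fun i _ => ?_
    split_ifs <;> simp
  have ht : S.total (fun i => (∑ a ∈ s, f a i) / D) = (∑ a ∈ s, S.total (f a)) / D := by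
    simp only [total]
    rw [sum_comm, sum_div]
    refine sum_congr rfl fun i _ => ?_
    rw [← mul_sum, mul_div_assoc]
  refine ⟨⟨⟨fun i => ?_, fun _ _ _ => subset_univ _, fun u v huv => ?_⟩, fun v _ => ?_⟩, ?_⟩
  · exact div_nonneg (sum_nonneg fun a ha => (hf a ha).nonneg i) hD.le
  · rw [hc, div_le_iff₀ hD]
    refine le_trans ?_ (hcodeg u v huv)
    rw [card_filter, Nat.cast_sum]
    refine sum_le_sum fun a ha => ?_
    by_cases hu : u ∈ U a
    · by_cases hv : v ∈ U a
      · simpa [hu, hv] using (hf a ha).codeg_le u v huv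
      · have h := codeg_le_deg (S := S) (hf a ha).nonneg v u
        rw [deg_eq_zero (hf a ha).toIsWeighting hv] at h
        have hsymm : S.codeg (f a) u v = S.codeg (f a) v u := by simp only [codeg, and_comm]
        simpa [hu, hv, hsymm] using h
    · have h := codeg_le_deg (S := S) (hf a ha).nonneg u v
      rw [deg_eq_zero (hf a ha).toIsWeighting hu] at h
      simpa [hu] using h
  · rw [hd, div_eq_one_iff_eq hD.ne', ← hdeg v, card_filter, Nat.cast_sum]
    refine sum_congr rfl fun a ha => ?_
    by_cases hv : v ∈ U a
    · simp [hv, (hf a ha).deg_eq v hv]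
    · simp [hv, deg_eq_zero (hf a ha).toIsWeighting hv]
  · rw [ht]
    gcongr
    simpa [nsmul_eq_mul] using sum_le_card_nsmul s _ τ hτ

lemma HasPartition.exists_unique_mem {U : Finset E} {κ : ℝ} (h : S.HasPartition U κ) :
    ∃ M ⊆ S.index, (∀ v ∈ U, ∃! i, i ∈ M ∧ v ∈ S.supp i) ∧ ∑ i ∈ M, S.cost i ≤ κ := by
  obtain ⟨M, hM, hdisj, rfl, hcost⟩ := h
  refine ⟨M, hM, fun v hv => ?_, hcost⟩
  obtain ⟨i, hi, hvi⟩ := mem_biUnion.1 hv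
  refine ⟨i, ⟨hi, hvi⟩, fun j hj => ?_⟩
  by_contra hne
  exact disjoint_left.1 (hdisj j hj.1 i hi hne) hj.2 hvi

end PackingSystem

section Cliques

variable {V : Type} [Fintype V]

/-- The edges of `G`, as cliques of size two. -/
abbrev EdgeClique (G : SimpleGraph V) : Type :=
  {T : Finset V // #T = 2 ∧ G.IsClique (T : Set V)}

lemma card_edgeClique_subset {G : SimpleGraph V} {K : Finset V} (hK : G.IsClique (K : Set V)) :
    #{T : EdgeClique G | T.1 ⊆ K} = (#K).choose 2 := by
  rw [← card_powersetCard, ← card_map (Function.Embedding.subtype _)]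
  congr 1
  ext T
  simp only [mem_map, mem_filter, mem_univ, true_and, Function.Embedding.subtype_apply,
    mem_powersetCard]
  constructor
  · rintro ⟨T, h, rfl⟩
    exact ⟨h, T.2.1⟩
  · rintro ⟨h, h2⟩
    exact ⟨⟨T, h2, hK.subset (coe_subset.2 h)⟩, h, rfl⟩

lemma sub_one_le_choose_two {k : ℕ} (hk : 2 ≤ k) : (k : ℝ) - 1 ≤ (k.choose 2 : ℕ) := by
  rw [Nat.cast_choose_two]
  have : (2 : ℝ) ≤ k := by exact_mod_cast hk
  nlinarith

/-- The cliques of `G` with between `2` and `m` vertices, as sets of edges. -/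
noncomputable def cliqueSystem (G : SimpleGraph V) (m : ℕ) (hm : 2 ≤ m) :
    PackingSystem (EdgeClique G) (Finset V) (m.choose 2) where
  supp K := {T | T.1 ⊆ K}
  cost K := #K - 1
  index := {K | G.IsClique (K : Set V) ∧ 2 ≤ #K ∧ #K ≤ m}
  single T := T.1
  single_mem T := by simp [T.2.1, T.2.2, hm]
  supp_single T := by
    ext T'
    simp only [mem_filter, mem_univ, true_and, mem_singleton]
    refine ⟨fun h => Subtype.ext (eq_of_subset_of_card_le h ?_), fun h => h ▸ Subset.rfl⟩
    rw [T.2.1, T'.2.1]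
  cost_single T := by norm_num [T.2.1]
  cost_nonneg K hK := by
    simp only [mem_filter, mem_univ, true_and] at hK
    have : (2 : ℝ) ≤ #K := by exact_mod_cast hK.2.1
    linarith
  cost_le K hK := by
    simp only [mem_filter, mem_univ, true_and] at hK
    rw [card_edgeClique_subset hK.1]
    exact sub_one_le_choose_two hK.2.1
  supp_nonempty K hK := by
    simp only [mem_filter, mem_univ, true_and] at hK
    rw [← card_pos, card_edgeClique_subset hK.1]
    exact Nat.choose_pos hK.2.1
  card_le K hK := by
    simp only [mem_filter, mem_univ, true_and] at hK
    rw [card_edgeClique_subset hK.1]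
    exact Nat.choose_le_choose 2 hK.2.2

variable {G : SimpleGraph V} {m : ℕ} {hm : 2 ≤ m}

lemma sum_edgeClique (b : Finset V → ℝ) (hb : ∀ T : Finset V, ¬ G.IsClique (T : Set V) → b T = 0)
    (K : Finset V) :
    ∑ T : EdgeClique G with T.1 ⊆ K, b T.1 = ∑ T ∈ K.powersetCard 2, b T := by
  refine (sum_map _ (Function.Embedding.subtype _) b).symm.trans ?_
  refine sum_subset (fun T hT => ?_) fun T hT hT' => hb T fun h => hT' ?_
  · simp only [mem_map, mem_filter, mem_univ, true_and, Function.Embedding.subtype_apply] at hT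
    obtain ⟨T, h, rfl⟩ := hT
    exact mem_powersetCard.2 ⟨h, T.2.1⟩
  · rw [mem_powersetCard] at hT
    simp only [mem_map, mem_filter, mem_univ, true_and, Function.Embedding.subtype_apply]
    exact ⟨⟨T, hT.2, h⟩, hT.1, rfl⟩

lemma sum_edge_weights_le (A : Finset V) (hA : #A = m) (w : EdgeClique G → ℝ) (l : ℝ) (hl : 0 ≤ l)
    (hw : ∀ K ∈ (cliqueSystem G m hm).index, (cliqueSystem G m hm).supp K ⊆
        ({T | T.1 ⊆ A} : Finset (EdgeClique G)) →
      ∑ T ∈ (cliqueSystem G m hm).supp K, w T ≤ l * (cliqueSystem G m hm).cost K) :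
    ∑ T : EdgeClique G with T.1 ⊆ A, w T ≤ l * ((m : ℝ) ^ 2 / 4) := by
  set b : Finset V → ℝ := fun T =>
    if h : (#T = 2 ∧ G.IsClique (T : Set V)) ∧ T ⊆ A then max (w ⟨T, h.1⟩) 0 else 0 with hbdef
  have hb0 : ∀ T, 0 ≤ b T := by
    intro T
    simp only [hbdef]
    split_ifs <;> simp
  have hb : ∀ T : Finset V, ¬ G.IsClique (T : Set V) → b T = 0 := by
    intro T hT
    simp [hbdef, hT]
  have hpos : ∀ T : Finset V, 0 < b T → G.IsClique (T : Set V) ∧ T ⊆ A ∧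
      ∀ T' : EdgeClique G, T'.1 = T → b T = w T' := by
    intro T hT
    simp only [hbdef] at hT ⊢
    split_ifs at hT with h
    · refine ⟨h.1.2, h.2, fun T' hT' => ?_⟩
      subst hT'
      rw [dif_pos h]
      refine max_eq_left ?_
      by_contra hneg
      rw [max_eq_right (not_le.1 hneg).le] at hT
      exact lt_irrefl _ hT
    · exact absurd hT (lt_irrefl _)
  have key := quadratic_form_le (fun u v => if u = v then 0 else b {u, v}) l hl (by simp)
    (fun u v => by simp [eq_comm, pair_comm]) (fun u v => by
      split_ifs
      exacts [le_rfl, hb0 _]) ?_ A (fun _ => 1) (fun _ _ => zero_le_one)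
  · simp only [mul_one, sum_const, nsmul_eq_mul, hA] at key
    rw [sum_pairs_eq_two_mul, ← sum_edgeClique b hb] at key
    have : ∑ T : EdgeClique G with T.1 ⊆ A, w T ≤ ∑ T : EdgeClique G with T.1 ⊆ A, b T.1 := by
      refine sum_le_sum fun T hT => ?_
      simp only [mem_filter, mem_univ, true_and] at hT
      simp only [hbdef]
      rw [dif_pos ⟨T.2, hT⟩]
      exact le_max_left _ _
    linarith
  · intro K hK hKpos
    rw [sum_pairs_eq_two_mul]
    suffices h : ∑ T ∈ K.powersetCard 2, b T ≤ l * ((#K : ℝ) - 1) by linarith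
    have hpair : ∀ u ∈ K, ∀ v ∈ K, u ≠ v → 0 < b {u, v} := by
      intro u hu v hv huv
      simpa [huv] using hKpos u hu v hv huv
    rcases Nat.lt_or_ge (#K) 2 with h2 | h2
    · have h1 : #K = 1 := by
        have := card_pos.2 hK
        omega
      rw [powersetCard_eq_empty.2 h2]
      simp [h1]
    · have hclique : G.IsClique (K : Set V) := by
        intro u hu v hv huv
        exact (hpos _ (hpair u hu v hv huv)).1 (by simp) (by simp) huv
      have hKA : K ⊆ A := by
        intro u hu
        obtain ⟨v, hv, hvu⟩ := exists_mem_ne (by omega : 1 < #K) u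
        exact (hpos _ (hpair u hu v hv hvu.symm)).2.1 (by simp)
      have hKi : K ∈ (cliqueSystem G m hm).index := by
        simp only [cliqueSystem, mem_filter, mem_univ, true_and]
        exact ⟨hclique, h2, hA ▸ card_le_card hKA⟩
      have hwK := hw K hKi (by
        intro T hT
        simp only [cliqueSystem, mem_filter, mem_univ, true_and] at hT ⊢
        exact hT.trans hKA)
      simp only [cliqueSystem] at hwK
      rw [← sum_edgeClique b hb]
      refine le_trans (sum_le_sum fun T hT => ?_) hwK
      simp only [mem_filter, mem_univ, true_and] at hT
      obtain ⟨u, v, huv, hTuv⟩ := card_eq_two.1 T.2.1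
      have hu : u ∈ K := hT (by simp [hTuv])
      have hv : v ∈ K := hT (by simp [hTuv])
      have hbT : 0 < b T.1 := hTuv ▸ hpair u hu v hv huv
      exact ((hpos _ hbT).2.2 T rfl).le

lemma exists_isFracPartition_subset (A : Finset V) (hA : #A = m) :
    ∃ g, (cliqueSystem G m hm).IsFracPartition {T | T.1 ⊆ A} 1 g ∧
      (cliqueSystem G m hm).total g ≤ (m : ℝ) ^ 2 / 4 + 1 :=
  PackingSystem.exists_isFracPartition_of_dual (Nat.choose_pos hm) _ _
    (fun w l hl hw => sum_edge_weights_le A hA w l hl hw) one_pos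

lemma exists_isFracPartition_average (hm3 : 3 ≤ m) (hn : m ≤ Fintype.card V) :
    ∃ f, (cliqueSystem G m hm).IsFracPartition univ
        (((m : ℝ) - 2) / ((Fintype.card V : ℝ) - 2)) f ∧
      (cliqueSystem G m hm).total f ≤
        (Fintype.card V : ℝ) ^ 2 * (((m : ℝ) ^ 2 / 4 + 1) / (m * (m - 1))) := by
  choose! g hg hgt using fun (A : Finset V) (hA : #A = m) =>
    exists_isFracPartition_subset (G := G) (hm := hm) A hA
  set n := Fintype.card V with hndef
  set D : ℕ := (n - 2).choose (m - 2) with hDdef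
  have hD : (0 : ℝ) < D := by exact_mod_cast Nat.choose_pos (by omega)
  have hm3' : (3 : ℝ) ≤ m := by exact_mod_cast hm3
  have hn' : (m : ℝ) ≤ n := by exact_mod_cast hn
  have hcount : ∀ W : Finset V, #W ≤ m →
      #{A ∈ (univ : Finset V).powersetCard m | W ⊆ A} = (n - #W).choose (m - #W) := by
    intro W hW
    rw [card_filter_powersetCard_subset W univ m (subset_univ _) hW, card_univ]
  have hdeg : ∀ T : EdgeClique G, (#{A ∈ (univ : Finset V).powersetCard m |
      T ∈ ({T | T.1 ⊆ A} : Finset (EdgeClique G))} : ℝ) = D := by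
    intro T
    have := hcount T.1 (by rw [T.2.1]; exact hm)
    rw [T.2.1] at this
    simp only [mem_filter, mem_univ, true_and]
    exact_mod_cast this
  have hcodeg : ∀ T T' : EdgeClique G, T ≠ T' → (#{A ∈ (univ : Finset V).powersetCard m |
      T ∈ ({T | T.1 ⊆ A} : Finset (EdgeClique G)) ∧
        T' ∈ ({T | T.1 ⊆ A} : Finset (EdgeClique G))} : ℝ) ≤ ((m : ℝ) - 2) / ((n : ℝ) - 2) * D := by
    intro T T' hTT'
    have h3 : 3 ≤ #(T.1 ∪ T'.1) := by
      by_contra! hlt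
      have hT : T.1 = T.1 ∪ T'.1 :=
        eq_of_subset_of_card_le subset_union_left (by rw [T.2.1]; omega)
      have hT' : T'.1 = T.1 ∪ T'.1 :=
        eq_of_subset_of_card_le subset_union_right (by rw [T'.2.1]; omega)
      exact hTT' (Subtype.ext (hT.trans hT'.symm))
    obtain ⟨W, hW, hW3⟩ := exists_subset_card_eq h3
    have hle : #{A ∈ (univ : Finset V).powersetCard m | T.1 ⊆ A ∧ T'.1 ⊆ A} ≤
        (n - 3).choose (m - 3) := by
      rw [← hW3, ← hcount W (by omega)]
      refine card_le_card (monotone_filter_right _ fun A _ hA => ?_)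
      exact hW.trans (union_subset hA.1 hA.2)
    have hrec : ((n : ℝ) - 2) * (n - 3).choose (m - 3) = D * ((m : ℝ) - 2) := by
      have h := Nat.add_one_mul_choose_eq (n - 3) (m - 3)
      rw [show n - 3 + 1 = n - 2 by omega, show m - 3 + 1 = m - 2 by omega] at h
      have h' : ((n - 2 : ℕ) : ℝ) * (n - 3).choose (m - 3) = D * ((m - 2 : ℕ) : ℝ) := by
        exact_mod_cast h
      rwa [Nat.cast_sub (by omega), Nat.cast_sub (by omega), Nat.cast_ofNat] at h'
    simp only [mem_filter, mem_univ, true_and]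
    have hn2 : (0 : ℝ) < n - 2 := by linarith
    rw [div_mul_eq_mul_div, le_div_iff₀ hn2]
    have hle' : (#{A ∈ (univ : Finset V).powersetCard m | T.1 ⊆ A ∧ T'.1 ⊆ A} : ℝ) ≤
        (n - 3).choose (m - 3) := by exact_mod_cast hle
    nlinarith
  obtain ⟨h1, h2⟩ := PackingSystem.isFracPartition_average (S := cliqueSystem G m hm)
    ((univ : Finset V).powersetCard m) (fun A => {T | T.1 ⊆ A}) g
    (fun A hA => hg A (mem_powersetCard.1 hA).2) (D := D)
    (δ := ((m : ℝ) - 2) / ((n : ℝ) - 2)) hD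
    (fun T => by convert hdeg T) (fun T T' h => by convert hcodeg T T' h)
    (fun A hA => hgt A (mem_powersetCard.1 hA).2)
  refine ⟨_, h1, h2.trans ?_⟩
  rw [card_powersetCard, card_univ, ← hndef, div_le_iff₀ hD]
  have hch : (n.choose m : ℝ) * ((m : ℝ) * (m - 1) / 2) = (n : ℝ) * (n - 1) / 2 * D := by
    rw [← Nat.cast_choose_two, ← Nat.cast_choose_two]
    exact_mod_cast Nat.choose_mul (n := n) hm
  have hmm : (0 : ℝ) < m * (m - 1) := by nlinarith
  have hle : (n.choose m : ℝ) ≤ (n : ℝ) ^ 2 * D / (m * (m - 1)) := by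
    rw [le_div_iff₀ hmm]
    nlinarith [mul_nonneg (by linarith : (0 : ℝ) ≤ n) hD.le]
  calc (n.choose m : ℝ) * ((m : ℝ) ^ 2 / 4 + 1)
      ≤ (n : ℝ) ^ 2 * D / (m * (m - 1)) * ((m : ℝ) ^ 2 / 4 + 1) := by gcongr
    _ = _ := by ring

end Cliques

/-- Every large graph has an edge partition into cliques of total cost at most `(1 + ε) n² / 4`. -/
lemma exists_clique_partition {ε : ℝ} (hε : 0 < ε) :
    ∃ N : ℕ, ∀ (V : Type) [Fintype V], N ≤ Fintype.card V → ∀ G : SimpleGraph V,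
      ∃ M : Finset (Finset V), (∀ K ∈ M, G.IsClique (K : Set V) ∧ 2 ≤ #K) ∧
        (∀ T : Finset V, #T = 2 → G.IsClique (T : Set V) → #{K ∈ M | T ⊆ K} = 1) ∧
        ∑ K ∈ M, ((#K : ℝ) - 1) ≤ (1 + ε) * (Fintype.card V : ℝ) ^ 2 / 4 := by
  obtain ⟨q, hq⟩ := exists_nat_ge (4 / ε)
  set m := q + 4 with hmdef
  have hm : 2 ≤ m := by omega
  have hm4 : (m : ℝ) = q + 4 := by simp [hmdef]
  have hq0 : (0 : ℝ) ≤ q := q.cast_nonneg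
  obtain ⟨δ, hδ, hround⟩ := exists_roundsWithin (Nat.choose_pos hm) (by positivity : 0 < ε / 4)
  obtain ⟨N, hN⟩ := exists_nat_ge ((m - 2 : ℝ) / δ + 2)
  refine ⟨max N m, fun V _ hV G => ?_⟩
  set n := Fintype.card V with hndef
  have hNn : (N : ℝ) ≤ n := by exact_mod_cast (le_max_left _ _).trans hV
  have hmn : m ≤ n := (le_max_right _ _).trans hV
  obtain ⟨f, hf, hft⟩ := exists_isFracPartition_average (G := G) (hm := hm) (by omega) hmn
  have hδn : ((m : ℝ) - 2) / ((n : ℝ) - 2) ≤ δ := by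
    have hmn' : (m : ℝ) ≤ n := by exact_mod_cast hmn
    rw [div_le_iff₀ (by linarith), mul_comm, ← div_le_iff₀ hδ]
    linarith
  have hf' : (cliqueSystem G m hm).IsFracPartition univ δ f :=
    ⟨⟨hf.nonneg, hf.supp_subset, fun u v huv => (hf.codeg_le u v huv).trans hδn⟩, hf.deg_eq⟩
  obtain ⟨M, hM, hunique, hcost⟩ := (hround _ _ _ _ f hf').exists_unique_mem
  have hM' : ∀ K ∈ M, G.IsClique (K : Set V) ∧ 2 ≤ #K := by
    intro K hK
    have := hM hK
    simp only [cliqueSystem, mem_filter, mem_univ, true_and] at this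
    exact ⟨this.1, this.2.1⟩
  refine ⟨M, hM', fun T hT hTc => ?_, hcost.trans ?_⟩
  · obtain ⟨K, ⟨hK, hTK⟩, hKu⟩ := hunique ⟨T, hT, hTc⟩ (mem_univ _)
    have hsupp : ∀ L, ⟨T, hT, hTc⟩ ∈ (cliqueSystem G m hm).supp L ↔ T ⊆ L := fun L => by
      simp [cliqueSystem]
    refine card_eq_one.2 ⟨K, ?_⟩
    ext L
    simp only [mem_filter, mem_singleton]
    refine ⟨fun h => hKu L ⟨h.1, (hsupp L).2 h.2⟩, ?_⟩
    rintro rfl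
    exact ⟨hK, (hsupp L).1 hTK⟩
  · have hcard : (#(univ : Finset (EdgeClique G)) : ℝ) ≤ (n : ℝ) ^ 2 / 2 := by
      have hle : #(univ : Finset (EdgeClique G)) ≤ n.choose 2 := by
        rw [hndef, ← card_univ, ← card_powersetCard, ← card_map (Function.Embedding.subtype _)]
        refine card_le_card fun T hT => ?_
        obtain ⟨T, -, rfl⟩ := mem_map.1 hT
        exact mem_powersetCard.2 ⟨subset_univ _, T.2.1⟩
      have hle' : (#(univ : Finset (EdgeClique G)) : ℝ) ≤ (n.choose 2 : ℕ) := by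
        exact_mod_cast hle
      rw [Nat.cast_choose_two] at hle'
      nlinarith [(n.cast_nonneg : (0 : ℝ) ≤ n)]
    have hratio : ((m : ℝ) ^ 2 / 4 + 1) / (m * (m - 1)) ≤ (1 + ε / 2) / 4 := by
      have h4 : 4 ≤ ε * q := by rwa [div_le_iff₀' hε] at hq
      rw [hm4, div_le_iff₀ (by nlinarith)]
      nlinarith [mul_nonneg hq0 hε.le, mul_le_mul_of_nonneg_right h4 hq0]
    calc (cliqueSystem G m hm).total f + ε / 4 * #(univ : Finset (EdgeClique G))
        ≤ (n : ℝ) ^ 2 * ((1 + ε / 2) / 4) + ε / 4 * ((n : ℝ) ^ 2 / 2) := by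
          refine add_le_add (hft.trans ?_) ?_ <;> gcongr
      _ = (1 + ε) * (n : ℝ) ^ 2 / 4 := by ring

/-- Erdős's conjecture, asymptotically (Theorem 1.4): with costs `c_i = i - 1`,
every `n`-vertex graph admits a partition of its edges into cliques of total
cost at most `(1 + ε) n² / 4`; equivalently `π₂(G, c) ≤ (1 + ε) n² / 4`. -/
theorem stmt0 :
    ∀ ε : ℝ, 0 < ε → ∃ N : ℕ, ∀ n : ℕ, N ≤ n → ∀ G : SimpleGraph (Fin n),
      (∃ f : Finset (Fin n) → ℝ, IsIntDecomp 2 G f ∧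
          cliqueCost (fun i => (i : ℝ) - 1) f ≤ (1 + ε) * (n : ℝ) ^ 2 / 4) ∧
      piInt 2 G (fun i => (i : ℝ) - 1) ≤ (1 + ε) * (n : ℝ) ^ 2 / 4 := by
  intro ε hε
  obtain ⟨N, hN⟩ := exists_clique_partition hε
  refine ⟨N, fun n hn G => ?_⟩
  obtain ⟨M, hM, hunique, hcost⟩ := hN (Fin n) (by simpa using hn) G
  rw [Fintype.card_fin] at hcost
  have hdecomp : ∃ f : Finset (Fin n) → ℝ, IsIntDecomp 2 G f ∧
      cliqueCost (fun i => (i : ℝ) - 1) f ≤ (1 + ε) * (n : ℝ) ^ 2 / 4 := by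
    refine ⟨fun K => if K ∈ M then 1 else 0, ⟨⟨fun K => ?_, fun K hK => if_neg fun hKM => hK ?_,
      fun T hT hTc => ?_⟩, fun K => ?_⟩, ?_⟩
    · positivity
    · exact ⟨card_pos.1 (by have := (hM K hKM).2; omega), (hM K hKM).1⟩
    · have h := hunique T hT hTc
      rw [← sum_filter, sum_const, nsmul_one, ← Nat.cast_one, ← h]
      congr 2
      ext K
      simp [and_comm]
    · by_cases h : K ∈ M <;> simp [h]
    · refine le_of_eq_of_le ?_ hcost
      simp [cliqueCost]
  refine ⟨hdecomp, ?_⟩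
  obtain ⟨f, hf, hle⟩ := hdecomp
  refine le_trans (csInf_le ?_ ⟨f, hf, rfl⟩) hle
  refine ⟨0, ?_⟩
  rintro x ⟨g, hg, rfl⟩
  refine sum_nonneg fun K _ => ?_
  by_cases hK : IsCliqueOf G K
  · have h1 : (1 : ℝ) ≤ #K := by exact_mod_cast card_pos.2 hK.1
    exact mul_nonneg (by linarith) (hg.1.1 K)
  · simp [hg.1.2.1 K hK]
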